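/- For every respecting forest P of order 2 there exists a unique isominimal realization of P within ℛ₂, i.e., a unique finite set X of ordinals which, equipped with the induced relations ≤, ≤₁, ≤₂, is isomorphic to P and pointwise minimal (comparing increasing enumerations) among all finite substructures of ℛ₂ isomorphic to P; moreover every element of X is smaller than 1^∞. -/

import Mathlib

open FirstOrder

/-- The relation symbols of the language of `ℛ₂`: three binary relations. -/
inductive ordRel : ℕ → Type
  | le : ordRel 2
  | le1 : ordRel 2
  | le2 : ordRel 2

/-- The first-order language with three binary relation symbols `≤`, `≤₁`, `≤₂`. -/
def ordLang : FirstOrder.Language := ⟨fun _ => Empty, ordRel⟩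

/-- The `ordLang`-structure on the set of ordinals below `β`, interpreting the three
relation symbols by `≤` and the given relations `le1`, `le2`. -/
def segStr (le1 le2 : Ordinal → Ordinal → Prop) (β : Ordinal) :
    ordLang.Structure {x : Ordinal // x < β} where
  funMap := fun f => Empty.elim f
  RelMap
    | .le => fun v => (v 0).1 ≤ (v 1).1
    | .le1 => fun v => le1 (v 0).1 (v 1).1
    | .le2 => fun v => le2 (v 0).1 (v 1).1

/-- Σ₁-formulas: a block of existential quantifiers applied to a quantifier-free formula. -/
inductive IsSigma1 {L : FirstOrder.Language} {α : Type} :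
    {n : ℕ} → L.BoundedFormula α n → Prop
  | of_isQF {n} {φ : L.BoundedFormula α n} (h : φ.IsQF) : IsSigma1 φ
  | ex {n} {φ : L.BoundedFormula α (n + 1)} (h : IsSigma1 φ) : IsSigma1 φ.ex

/-- Π₁-formulas: a block of universal quantifiers applied to a quantifier-free formula. -/
inductive IsPi1 {L : FirstOrder.Language} {α : Type} :
    {n : ℕ} → L.BoundedFormula α n → Prop
  | of_isQF {n} {φ : L.BoundedFormula α n} (h : φ.IsQF) : IsPi1 φ
  | all {n} {φ : L.BoundedFormula α (n + 1)} (h : IsPi1 φ) : IsPi1 φ.all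

/-- Σ₂-formulas: a block of existential quantifiers applied to a Π₁-formula. -/
inductive IsSigma2 {L : FirstOrder.Language} {α : Type} :
    {n : ℕ} → L.BoundedFormula α n → Prop
  | of_isPi1 {n} {φ : L.BoundedFormula α n} (h : IsPi1 φ) : IsSigma2 φ
  | ex {n} {φ : L.BoundedFormula α (n + 1)} (h : IsSigma2 φ) : IsSigma2 φ.ex

/-- Realization of a formula with `k` parameters in the segment structure below `β`. -/
def RealizeIn (le1 le2 : Ordinal → Ordinal → Prop) (β : Ordinal) {k : ℕ}
    (φ : ordLang.Formula (Fin k)) (v : Fin k → {x : Ordinal // x < β}) : Prop :=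
  letI := segStr le1 le2 β
  φ.Realize v

/-- `a ≤ b` and the segment below `a` is an elementary substructure of the segment below `b`
with respect to the class `C` of formulas (with parameters from below `a`). -/
def ElemSub (C : ∀ k : ℕ, ordLang.Formula (Fin k) → Prop)
    (le1 le2 : Ordinal → Ordinal → Prop) (a b : Ordinal) : Prop :=
  ∃ hab : a ≤ b,
    ∀ (k : ℕ) (φ : ordLang.Formula (Fin k)), C k φ →
      ∀ v : Fin k → {x : Ordinal // x < a},
        RealizeIn le1 le2 a φ v ↔
          RealizeIn le1 le2 b φ (fun j => ⟨(v j).1, lt_of_lt_of_le (v j).2 hab⟩)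

/-- The pair of relations `le1`, `le2` satisfies the simultaneous recursive definition of
`≤₁` and `≤₂` on the ordinals: `α ≤ᵢ β` iff `α ≤ β` and the segment below `α` is a
Σᵢ-elementary substructure of the segment below `β`. -/
def IsR2Pair (le1 le2 : Ordinal → Ordinal → Prop) : Prop :=
  (∀ a b, le1 a b ↔ ElemSub (fun _ φ => IsSigma1 φ) le1 le2 a b) ∧
  (∀ a b, le2 a b ↔ ElemSub (fun _ φ => IsSigma2 φ) le1 le2 a b)

/-- The strict part of `≤₁`. -/
def Lt1 (le1 : Ordinal → Ordinal → Prop) (a b : Ordinal) : Prop := le1 a b ∧ a ≠ b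

/-- The strict part of `≤₂`. -/
def Lt2 (le2 : Ordinal → Ordinal → Prop) (a b : Ordinal) : Prop := le2 a b ∧ a ≠ b

/-- `1^∞`: the least ordinal `ν` such that below `ν` there are `<₂`-chains of every finite
length. -/
noncomputable def OneInfty (le2 : Ordinal → Ordinal → Prop) : Ordinal :=
  sInf {ν : Ordinal | ∀ n : ℕ, ∃ β : Fin n → Ordinal,
    (∀ i, β i < ν) ∧
    ∀ (i : ℕ) (hi : i + 1 < n), Lt2 le2 (β ⟨i, Nat.lt_of_succ_lt hi⟩) (β ⟨i + 1, hi⟩)}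

/-- A respecting forest of order 2: a finite structure with a linear order `≤₀` and partial
orders `≤₁`, `≤₂` which are forests, with `≤₂ ⊆ ≤₁ ⊆ ≤₀`, and `≤ᵢ₊₁` respecting `≤ᵢ`. -/
structure RForest where
  P : Type
  [fintypeP : Fintype P]
  le0 : P → P → Prop
  le1 : P → P → Prop
  le2 : P → P → Prop
  le0_refl : ∀ p, le0 p p
  le0_trans : ∀ p q r, le0 p q → le0 q r → le0 p r
  le0_antisymm : ∀ p q, le0 p q → le0 q p → p = q
  le0_total : ∀ p q, le0 p q ∨ le0 q p
  le1_refl : ∀ p, le1 p p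
  le1_trans : ∀ p q r, le1 p q → le1 q r → le1 p r
  le1_antisymm : ∀ p q, le1 p q → le1 q p → p = q
  le2_refl : ∀ p, le2 p p
  le2_trans : ∀ p q r, le2 p q → le2 q r → le2 p r
  le2_antisymm : ∀ p q, le2 p q → le2 q p → p = q
  le2_sub_le1 : ∀ p q, le2 p q → le1 p q
  le1_sub_le0 : ∀ p q, le1 p q → le0 p q
  forest1 : ∀ p q r, le1 q p → le1 r p → le1 q r ∨ le1 r q
  forest2 : ∀ p q r, le2 q p → le2 r p → le2 q r ∨ le2 r q
  respects1 : ∀ p q r, le0 p q → le0 q r → le1 p r → le1 p q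
  respects2 : ∀ p q r, le1 p q → le1 q r → le2 p r → le2 p q

attribute [instance] RForest.fintypeP

/-- The finite set `X` of ordinals, with the relations induced from `ℛ₂`, is isomorphic to the
respecting forest `F`. -/
def Realizes (le1 le2 : Ordinal → Ordinal → Prop) (F : RForest) (X : Finset Ordinal) : Prop :=
  ∃ e : F.P ≃ {x // x ∈ X}, ∀ p q : F.P,
    (F.le0 p q ↔ ((e p : Ordinal) ≤ (e q : Ordinal))) ∧
    (F.le1 p q ↔ le1 (e p : Ordinal) (e q : Ordinal)) ∧
    (F.le2 p q ↔ le2 (e p : Ordinal) (e q : Ordinal))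

/-- Pointwise comparison of two finite sets of ordinals via their increasing enumerations. -/
def pwLE (X Y : Finset Ordinal) : Prop :=
  ∃ h : X.card = Y.card, ∀ i : Fin X.card,
    ((X.orderIsoOfFin rfl i : {x // x ∈ X}) : Ordinal) ≤
      ((Y.orderIsoOfFin h.symm i : {x // x ∈ Y}) : Ordinal)

/-- `X` is the isominimal realization of the respecting forest `F` in `ℛ₂`: it is isomorphic
to `F` and pointwise minimal among all finite substructures of `ℛ₂` isomorphic to `F`. -/
def IsIsominimalRealization (le1 le2 : Ordinal → Ordinal → Prop) (F : RForest)
    (X : Finset Ordinal) : Prop :=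
  Realizes le1 le2 F X ∧ ∀ Y : Finset Ordinal, Realizes le1 le2 F Y → pwLE X Y

/-- A covering of the respecting forest `F` into `ℛ₂`. -/
def IsCovering (le1 le2 : Ordinal → Ordinal → Prop) (F : RForest)
    (c : F.P → Ordinal) : Prop :=
  (∀ p q, F.le0 p q ↔ c p ≤ c q) ∧
  (∀ p q, F.le1 p q → le1 (c p) (c q)) ∧
  (∀ p q, F.le2 p q → le2 (c p) (c q))


/-- A covering of the respecting forest `F` into the respecting forest `G`. -/
def ForestCovering (F G : RForest) (f : F.P → G.P) : Prop :=
  (∀ p q, F.le0 p q ↔ G.le0 (f p) (f q)) ∧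
  (∀ p q, F.le1 p q → G.le1 (f p) (f q)) ∧
  (∀ p q, F.le2 p q → G.le2 (f p) (f q))

section logic
open FirstOrder.Language

variable (le1 le2 : Ordinal → Ordinal → Prop)

def relv : {l : ℕ} → ordRel l → (Fin l → Ordinal) → Prop
  | _, .le => fun w => w 0 ≤ w 1
  | _, .le1 => fun w => le1 (w 0) (w 1)
  | _, .le2 => fun w => le2 (w 0) (w 1)

def tv {k n : ℕ} (v : Fin k → Ordinal) (xs : Fin n → Ordinal) :
    ordLang.Term (Fin k ⊕ Fin n) → Ordinal
  | .var (Sum.inl i) => v i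
  | .var (Sum.inr j) => xs j
  | .func f _ => Empty.elim f

def sat (D : Ordinal → Prop) {k : ℕ} : {n : ℕ} → ordLang.BoundedFormula (Fin k) n →
    (Fin k → Ordinal) → (Fin n → Ordinal) → Prop
  | _, .falsum => fun _ _ => False
  | _, .equal t1 t2 => fun v xs => tv v xs t1 = tv v xs t2
  | _, .rel R ts => fun v xs => relv le1 le2 R (fun i => tv v xs (ts i))
  | _, .imp f g => fun v xs => sat D f v xs → sat D g v xs
  | _, .all f => fun v xs => ∀ x, D x → sat D f v (Fin.snoc xs x)

theorem term_val (β : Ordinal) {k n : ℕ} (v : Fin k → {x : Ordinal // x < β})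
    (xs : Fin n → {x : Ordinal // x < β}) (t : ordLang.Term (Fin k ⊕ Fin n)) :
    ((@Term.realize ordLang _ (segStr le1 le2 β) _ (Sum.elim v xs) t : {x : Ordinal // x < β}) : Ordinal)
      = tv (fun i => (v i).1) (fun i => (xs i).1) t := by
  cases t with
  | var a => cases a <;> rfl
  | func f _ => exact Empty.elim f

theorem realize_sat (β : Ordinal) {k n : ℕ} (φ : ordLang.BoundedFormula (Fin k) n)
    (v : Fin k → {x : Ordinal // x < β}) (xs : Fin n → {x : Ordinal // x < β}) :
    @BoundedFormula.Realize ordLang _ (segStr le1 le2 β) _ _ φ v xs ↔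
      sat le1 le2 (· < β) φ (fun i => (v i).1) (fun i => (xs i).1) := by
  let _ := segStr le1 le2 β
  induction φ with
  | falsum => exact Iff.rfl
  | equal t1 t2 =>
    have h1 := term_val le1 le2 β v xs t1
    have h2 := term_val le1 le2 β v xs t2
    simp only [BoundedFormula.Realize, sat]
    rw [← h1, ← h2]
    exact Subtype.ext_iff
  | rel R ts =>
    simp only [BoundedFormula.Realize, sat]
    have h1 := fun i => term_val le1 le2 β v xs (ts i)
    simp only [← h1]
    cases R <;> exact Iff.rfl
  | imp f g hf hg =>
    simp only [BoundedFormula.Realize, sat]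
    exact imp_congr (hf _) (hg _)
  | all f hf =>
    simp only [BoundedFormula.Realize, sat]
    have key : ∀ x : {x : Ordinal // x < β},
      (fun i => ((Fin.snoc xs x : Fin _ → {x : Ordinal // x < β}) i).1)
        = (Fin.snoc (fun i => (xs i).1) x.1 : Fin _ → Ordinal) := by
      intro x
      funext i
      refine Fin.lastCases ?_ (fun j => ?_) i <;> simp
    constructor
    · intro h x hx
      have := (hf (Fin.snoc xs ⟨x, hx⟩)).1 (h ⟨x, hx⟩)
      rwa [key] at this
    · intro h x
      refine (hf _).2 ?_
      rw [key]
      exact h x.1 x.2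

theorem elemSub_iff (C : ∀ k : ℕ, ordLang.Formula (Fin k) → Prop) (a b : Ordinal) :
    ElemSub C le1 le2 a b ↔ a ≤ b ∧ ∀ (k : ℕ) (φ : ordLang.Formula (Fin k)), C k φ →
      ∀ v : Fin k → Ordinal, (∀ i, v i < a) →
        (sat le1 le2 (· < a) φ v Fin.elim0 ↔ sat le1 le2 (· < b) φ v Fin.elim0) := by
  have e : ∀ β : Ordinal, ∀ (k : ℕ) (φ : ordLang.Formula (Fin k)) (w : Fin k → {x : Ordinal // x < β}),
      RealizeIn le1 le2 β φ w ↔ sat le1 le2 (· < β) φ (fun i => (w i).1) Fin.elim0 := by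
    intro β k φ w
    have := realize_sat le1 le2 β φ w (default)
    rw [Subsingleton.elim (fun i => ((default : Fin 0 → {x : Ordinal // x < β}) i).1) Fin.elim0] at this
    exact this
  constructor
  · rintro ⟨hab, h⟩
    refine ⟨hab, fun k φ hφ v hv => ?_⟩
    have := h k φ hφ (fun i => ⟨v i, hv i⟩)
    rwa [e, e] at this
  · rintro ⟨hab, h⟩
    refine ⟨hab, fun k φ hφ v => ?_⟩
    rw [e, e]
    exact h k φ hφ _ (fun i => (v i).2)

variable {le1 le2}

theorem sat_qf {k n : ℕ} {φ : ordLang.BoundedFormula (Fin k) n} (h : φ.IsQF)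
    (D E : Ordinal → Prop) (v : Fin k → Ordinal) (xs : Fin n → Ordinal) :
    sat le1 le2 D φ v xs ↔ sat le1 le2 E φ v xs := by
  induction h with
  | falsum => exact Iff.rfl
  | of_isAtomic h => cases h <;> exact Iff.rfl
  | imp _ _ h1 h2 => simp only [sat]; rw [h1, h2]

theorem sat_ex {k n : ℕ} {φ : ordLang.BoundedFormula (Fin k) (n+1)}
    (D : Ordinal → Prop) (v : Fin k → Ordinal) (xs : Fin n → Ordinal) :
    sat le1 le2 D φ.ex v xs ↔ ∃ x, D x ∧ sat le1 le2 D φ v (Fin.snoc xs x) := by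
  simp [BoundedFormula.ex, BoundedFormula.not, sat]

theorem sat_sigma1_mono {k n : ℕ} {φ : ordLang.BoundedFormula (Fin k) n} (h : IsSigma1 φ)
    {D E : Ordinal → Prop} (hDE : ∀ x, D x → E x) (v : Fin k → Ordinal) (xs : Fin n → Ordinal) :
    sat le1 le2 D φ v xs → sat le1 le2 E φ v xs := by
  induction h with
  | of_isQF h => exact (sat_qf h D E v xs).1
  | ex _ ih =>
    rw [sat_ex, sat_ex]
    rintro ⟨x, hx, h⟩
    exact ⟨x, hDE x hx, ih _ h⟩

theorem sat_pi1_mono {k n : ℕ} {φ : ordLang.BoundedFormula (Fin k) n} (h : IsPi1 φ)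
    {D E : Ordinal → Prop} (hDE : ∀ x, D x → E x) (v : Fin k → Ordinal) (xs : Fin n → Ordinal) :
    sat le1 le2 E φ v xs → sat le1 le2 D φ v xs := by
  induction h with
  | of_isQF h => exact (sat_qf h E D v xs).1
  | all _ ih =>
    intro h x hx
    exact ih _ (h x (hDE x hx))

/-- bound the witnesses -/
theorem sat_sigma1_bdd {α : Ordinal} (hα : ∀ x < α, x + 1 < α) (h0 : 0 < α)
    {k n : ℕ} {φ : ordLang.BoundedFormula (Fin k) n} (h : IsSigma1 φ)
    (v : Fin k → Ordinal) (xs : Fin n → Ordinal) :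
    sat le1 le2 (· < α) φ v xs → ∃ δ < α, sat le1 le2 (· < δ) φ v xs := by
  induction h with
  | of_isQF h => exact fun h' => ⟨0, h0, (sat_qf h _ _ v xs).1 h'⟩
  | ex hh ih =>
    rw [sat_ex]
    rintro ⟨x, hx, h⟩
    obtain ⟨δ, hδ, h⟩ := ih _ h
    refine ⟨max δ (x+1), max_lt hδ (hα x hx), ?_⟩
    rw [sat_ex]
    refine ⟨x, lt_of_lt_of_le (by simp) (le_max_right _ _), ?_⟩
    exact sat_sigma1_mono hh (fun y hy => lt_of_lt_of_le hy (le_max_left _ _)) _ _ h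

end logic
section definability
open FirstOrder.Language

variable (le1 le2 : Ordinal → Ordinal → Prop)

def QFDef (k n : ℕ) (A : (Fin k ⊕ Fin n → Ordinal) → Prop) : Prop :=
  ∃ φ : ordLang.BoundedFormula (Fin k) n, φ.IsQF ∧
    ∀ D v xs, sat le1 le2 D φ v xs ↔ A (Sum.elim v xs)

variable {le1 le2} {k n : ℕ}

theorem tv_var (v : Fin k → Ordinal) (xs : Fin n → Ordinal) (i : Fin k ⊕ Fin n) :
    tv v xs (.var i) = Sum.elim v xs i := by cases i <;> rfl

theorem qf_rel (R : ordRel 2) (i j : Fin k ⊕ Fin n) :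
    QFDef le1 le2 k n (fun w => relv le1 le2 R ![w i, w j]) := by
  let R' : ordLang.Relations 2 := R
  refine ⟨.rel R' ![.var i, .var j], .of_isAtomic (.rel _ _), ?_⟩
  intro D v xs
  simp only [sat]
  have : (fun l => tv v xs ((![.var i, .var j] : Fin 2 → ordLang.Term (Fin k ⊕ Fin n)) l))
      = ![Sum.elim v xs i, Sum.elim v xs j] := by
    funext l
    fin_cases l
    · exact tv_var v xs i
    · exact tv_var v xs j
  rw [this]

theorem qf_bot : QFDef le1 le2 k n (fun _ => False) :=
  ⟨.falsum, .falsum, fun _ _ _ => Iff.rfl⟩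

theorem qf_imp {A B} (hA : QFDef le1 le2 k n A) (hB : QFDef le1 le2 k n B) :
    QFDef le1 le2 k n (fun w => A w → B w) := by
  obtain ⟨φ, h1, h2⟩ := hA
  obtain ⟨ψ, h3, h4⟩ := hB
  exact ⟨φ.imp ψ, h1.imp h3, fun D v xs => imp_congr (h2 D v xs) (h4 D v xs)⟩

theorem qf_congr {A B} (hA : QFDef le1 le2 k n A) (h : ∀ w, A w ↔ B w) : QFDef le1 le2 k n B := by
  have : A = B := by funext w; exact propext (h w)
  exact this ▸ hA

theorem qf_not {A} (hA : QFDef le1 le2 k n A) : QFDef le1 le2 k n (fun w => ¬ A w) :=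
  qf_imp hA qf_bot

theorem qf_true : QFDef le1 le2 k n (fun _ => True) :=
  qf_congr (qf_not qf_bot) (by simp)

theorem qf_and {A B} (hA : QFDef le1 le2 k n A) (hB : QFDef le1 le2 k n B) :
    QFDef le1 le2 k n (fun w => A w ∧ B w) :=
  qf_congr (qf_not (qf_imp hA (qf_not hB))) (by intro w; tauto)

theorem qf_prop_imp {A} (p : Prop) (hA : QFDef le1 le2 k n A) :
    QFDef le1 le2 k n (fun w => p → A w) := by
  by_cases hp : p
  · exact qf_congr hA (by simp [hp])
  · exact qf_congr qf_true (by simp [hp])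

theorem qf_all {ι : Type} [Finite ι] {A : ι → (Fin k ⊕ Fin n → Ordinal) → Prop}
    (h : ∀ i, QFDef le1 le2 k n (A i)) : QFDef le1 le2 k n (fun w => ∀ i, A i w) := by
  classical
  have := Fintype.ofFinite ι
  have key : ∀ s : Finset ι, QFDef le1 le2 k n (fun w => ∀ i ∈ s, A i w) := by
    intro s
    induction s using Finset.induction_on with
    | empty => exact qf_congr qf_true (by simp)
    | insert a s _ ih => exact qf_congr (qf_and (h a) ih) (by simp)
  exact qf_congr (key Finset.univ) (by simp)

theorem qf_le (i j : Fin k ⊕ Fin n) : QFDef le1 le2 k n (fun w => w i ≤ w j) := qf_rel .le i j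
theorem qf_le1 (i j : Fin k ⊕ Fin n) : QFDef le1 le2 k n (fun w => le1 (w i) (w j)) :=
  qf_rel .le1 i j
theorem qf_le2 (i j : Fin k ⊕ Fin n) : QFDef le1 le2 k n (fun w => le2 (w i) (w j)) :=
  qf_rel .le2 i j
theorem qf_lt (i j : Fin k ⊕ Fin n) : QFDef le1 le2 k n (fun w => w i < w j) :=
  qf_congr (qf_not (qf_le j i)) (by simp)

theorem sat_exs (D : Ordinal → Prop) : ∀ {n : ℕ} (φ : ordLang.BoundedFormula (Fin k) n)
    (v : Fin k → Ordinal), sat le1 le2 D φ.exs v Fin.elim0 ↔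
      ∃ xs : Fin n → Ordinal, (∀ i, D (xs i)) ∧ sat le1 le2 D φ v xs
  | 0, φ, v => by
    constructor
    · intro h
      exact ⟨Fin.elim0, fun i => i.elim0, h⟩
    · rintro ⟨xs, -, h⟩
      rwa [Subsingleton.elim xs Fin.elim0] at h
  | n+1, φ, v => by
    have := sat_exs D (n := n) φ.ex v
    refine this.trans ?_
    constructor
    · rintro ⟨xs, h1, h2⟩
      rw [sat_ex] at h2
      obtain ⟨x, hx, h⟩ := h2
      refine ⟨Fin.snoc xs x, ?_, h⟩
      intro i
      refine Fin.lastCases ?_ (fun j => ?_) i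
      · simpa using hx
      · simpa using h1 j
    · rintro ⟨xs, h1, h2⟩
      refine ⟨Fin.init xs, fun i => h1 _, ?_⟩
      rw [sat_ex]
      refine ⟨xs (Fin.last n), h1 _, ?_⟩
      rwa [Fin.snoc_init_self]

theorem sigma1_exs : ∀ {n : ℕ} {φ : ordLang.BoundedFormula (Fin k) n},
    IsSigma1 φ → IsSigma1 φ.exs
  | 0, _, h => h
  | n+1, φ, h => sigma1_exs (n := n) (φ := φ.ex) h.ex

theorem sigma2_exs : ∀ {n : ℕ} {φ : ordLang.BoundedFormula (Fin k) n},
    IsSigma2 φ → IsSigma2 φ.exs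
  | 0, _, h => h
  | n+1, φ, h => sigma2_exs (n := n) (φ := φ.ex) h.ex

def alln {n : ℕ} : (m : ℕ) → ordLang.BoundedFormula (Fin k) (n + m) →
    ordLang.BoundedFormula (Fin k) n
  | 0, φ => φ
  | m+1, φ => alln m (BoundedFormula.all (n := n + m) φ)

theorem pi1_alln : ∀ (m : ℕ) (φ : ordLang.BoundedFormula (Fin k) (n + m)),
    IsPi1 φ → IsPi1 (alln m φ)
  | 0, _, h => h
  | m+1, φ, h => pi1_alln m _ (IsPi1.all (n := n + m) h)

theorem sat_alln (D : Ordinal → Prop) (v : Fin k → Ordinal) (xs : Fin n → Ordinal) : ∀ (m : ℕ)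
    (φ : ordLang.BoundedFormula (Fin k) (n + m)), sat le1 le2 D (alln m φ) v xs ↔
      ∀ zs : Fin m → Ordinal, (∀ i, D (zs i)) → sat le1 le2 D φ v (Fin.append xs zs)
  | 0, φ => by
    constructor
    · intro h zs _
      have : Fin.append xs zs = xs := by
        funext i; exact Fin.append_left xs zs i
      rw [this]; exact h
    · intro h
      have := h Fin.elim0 (fun i => i.elim0)
      have e : Fin.append xs (Fin.elim0 : Fin 0 → Ordinal) = xs := by
        funext i; exact Fin.append_left xs _ i
      rw [e] at this; exact this
  | m+1, φ => by
    refine (sat_alln D v xs m _).trans ?_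
    constructor
    · intro h zs hz
      have := h (Fin.init zs) (fun i => hz _) (zs (Fin.last m)) (hz _)
      rw [← Fin.append_snoc, Fin.snoc_init_self] at this
      exact this
    · intro h zs hz x hx
      have := h (Fin.snoc zs x) (by
        intro i
        refine Fin.lastCases ?_ (fun j => ?_) i
        · simpa using hx
        · simpa using hz j)
      rw [Fin.append_snoc] at this
      exact this

theorem refl1_raw {a b : Ordinal}
    (h : ElemSub (fun _ φ => IsSigma1 φ) le1 le2 a b)
    {A : (Fin k ⊕ Fin n → Ordinal) → Prop} (hA : QFDef le1 le2 k n A)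
    (v : Fin k → Ordinal) (hv : ∀ i, v i < a)
    (xs : Fin n → Ordinal) (hxs : ∀ i, xs i < b) (hh : A (Sum.elim v xs)) :
    ∃ ys : Fin n → Ordinal, (∀ i, ys i < a) ∧ A (Sum.elim v ys) := by
  rw [elemSub_iff] at h
  obtain ⟨φ, h1, h2⟩ := hA
  have := (h.2 k φ.exs (sigma1_exs (.of_isQF h1)) v hv).2
    ((sat_exs _ _ _).2 ⟨xs, hxs, (h2 _ _ _).2 hh⟩)
  obtain ⟨ys, h3, h4⟩ := (sat_exs _ _ _).1 this
  exact ⟨ys, h3, (h2 _ _ _).1 h4⟩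

theorem refl2_raw {a b : Ordinal} {m : ℕ}
    (h : ElemSub (fun _ φ => IsSigma2 φ) le1 le2 a b)
    {A : (Fin k ⊕ Fin (n + m) → Ordinal) → Prop} (hA : QFDef le1 le2 k (n+m) A)
    (v : Fin k → Ordinal) (hv : ∀ i, v i < a)
    (xs : Fin n → Ordinal) (hxs : ∀ i, xs i < b)
    (hh : ∀ zs : Fin m → Ordinal, (∀ i, zs i < b) → A (Sum.elim v (Fin.append xs zs))) :
    ∃ ys : Fin n → Ordinal, (∀ i, ys i < a) ∧
      ∀ zs : Fin m → Ordinal, (∀ i, zs i < a) → A (Sum.elim v (Fin.append ys zs)) := by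
  rw [elemSub_iff] at h
  obtain ⟨φ, h1, h2⟩ := hA
  have := (h.2 k (alln m φ).exs (sigma2_exs (.of_isPi1 (pi1_alln _ _ (.of_isQF h1)))) v hv).2
    ((sat_exs _ _ _).2 ⟨xs, hxs, (sat_alln _ _ _ _ _).2 fun zs hz => (h2 _ _ _).2 (hh zs hz)⟩)
  obtain ⟨ys, h3, h4⟩ := (sat_exs _ _ _).1 this
  exact ⟨ys, h3, fun zs hz => (h2 _ _ _).1 ((sat_alln _ _ _ _ _).1 h4 zs hz)⟩

end definability
/-- positive diagram preservation -/
def Pres {P : Type} (le1 le2 : Ordinal → Ordinal → Prop) (W : P → Prop)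
    (T0 T1 T2 : P → P → Prop) (y : P → Ordinal) : Prop :=
  ∀ p q, W p → W q → (T0 p q → y p < y q) ∧ (T1 p q → le1 (y p) (y q)) ∧
    (T2 p q → le2 (y p) (y q))

structure OS (R1 R2 : Ordinal → Ordinal → Prop) : Prop where
  refl1 : ∀ a, R1 a a
  refl2 : ∀ a, R2 a a
  trans1 : ∀ {a b c}, R1 a b → R1 b c → R1 a c
  trans2 : ∀ {a b c}, R2 a b → R2 b c → R2 a c
  sub21 : ∀ {a b}, R2 a b → R1 a b
  sub1 : ∀ {a b}, R1 a b → a ≤ b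
  resp1 : ∀ {a b c}, a ≤ b → b ≤ c → R1 a c → R1 a b
  resp2 : ∀ {a b c}, R1 a b → R1 b c → R2 a c → R2 a b
  rfl1 : ∀ {P : Type} [Fintype P] {a b : Ordinal}, R1 a b → ∀ (S U : P → Prop),
    (∀ p, S p → ¬ U p) → ∀ (g : P → Ordinal), (∀ p, S p → g p < a) → (∀ p, U p → g p < b) →
    ∀ T0 T1 T2 : P → P → Prop, Pres R1 R2 (fun p => S p ∨ U p) T0 T1 T2 g →
    ∃ y : P → Ordinal, (∀ p, ¬ U p → y p = g p) ∧ (∀ p, U p → y p < a) ∧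
      Pres R1 R2 (fun p => S p ∨ U p) T0 T1 T2 y
  rfl2 : ∀ {P : Type} [Fintype P] {a b : Ordinal}, R2 a b → a < b → ∀ (S U V : P → Prop),
    (∀ p, S p → ¬ U p) → (∀ p, V p → ¬ S p ∧ ¬ U p) →
    ∀ (g : P → Ordinal), (∀ p, S p → g p < a) → (∀ p, U p → g p < b) →
    ∀ T0 T1 T2 : P → P → Prop, Pres R1 R2 (fun p => S p ∨ U p) T0 T1 T2 g →
    ∀ T0' T1' T2' : P → P → Prop,
    (¬ ∃ z : P → Ordinal, (∀ p, ¬ V p → z p = g p) ∧ (∀ p, V p → z p < b) ∧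
      Pres R1 R2 (fun p => S p ∨ U p ∨ V p) T0' T1' T2' z) →
    ∃ y : P → Ordinal, (∀ p, ¬ U p → y p = g p) ∧ (∀ p, U p → y p < a) ∧
      Pres R1 R2 (fun p => S p ∨ U p) T0 T1 T2 y ∧ (∀ p, U p → R1 (g p) b → R1 (y p) a) ∧
      ¬ ∃ z : P → Ordinal, (∀ p, (S p ∨ U p) → z p = y p) ∧ (∀ p, V p → z p < a) ∧
      Pres R1 R2 (fun p => S p ∨ U p ∨ V p) T0' T1' T2' z

section os
open FirstOrder.Language
variable {le1 le2 : Ordinal → Ordinal → Prop} {k n : ℕ}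

theorem qf_pres {P : Type} [Fintype P] (W : P → Prop) (T0 T1 T2 : P → P → Prop)
    (j : {p // W p} → Fin k ⊕ Fin n) :
    QFDef le1 le2 k n (fun w => ∀ p q : {p // W p}, (T0 p q → w (j p) < w (j q)) ∧
      (T1 p q → le1 (w (j p)) (w (j q))) ∧ (T2 p q → le2 (w (j p)) (w (j q)))) :=
  qf_all fun p => qf_all fun q => qf_and (qf_prop_imp _ (qf_lt _ _))
    (qf_and (qf_prop_imp _ (qf_le1 _ _)) (qf_prop_imp _ (qf_le2 _ _)))

theorem pres_iff {P : Type} (W : P → Prop) (T0 T1 T2 : P → P → Prop)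
    (j : {p // W p} → Fin k ⊕ Fin n) (w : Fin k ⊕ Fin n → Ordinal) (y : P → Ordinal)
    (h : ∀ p : {p // W p}, w (j p) = y p) :
    (∀ p q : {p // W p}, (T0 p q → w (j p) < w (j q)) ∧
      (T1 p q → le1 (w (j p)) (w (j q))) ∧ (T2 p q → le2 (w (j p)) (w (j q)))) ↔
    Pres le1 le2 W T0 T1 T2 y := by
  constructor
  · intro H p q hp hq
    have := H ⟨p, hp⟩ ⟨q, hq⟩
    simpa only [h] using this
  · intro H p q
    simpa only [h] using H p q p.2 q.2

theorem refl1_P {P : Type} [Fintype P] {a b : Ordinal}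
    (h : ElemSub (fun _ φ => IsSigma1 φ) le1 le2 a b) (S U : P → Prop)
    (hSU : ∀ p, S p → ¬ U p) (g : P → Ordinal) (hS : ∀ p, S p → g p < a)
    (hU : ∀ p, U p → g p < b)
    (T0 T1 T2 : P → P → Prop) (hg : Pres le1 le2 (fun p => S p ∨ U p) T0 T1 T2 g) :
    ∃ y : P → Ordinal, (∀ p, ¬ U p → y p = g p) ∧ (∀ p, U p → y p < a) ∧
      Pres le1 le2 (fun p => S p ∨ U p) T0 T1 T2 y := by
  classical
  let eS := Fintype.equivFin {p // S p}
  let eU := Fintype.equivFin {p // U p}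
  let j : {p // S p ∨ U p} → Fin (Fintype.card {p // S p}) ⊕ Fin (Fintype.card {p // U p}) :=
    fun p => if hs : S p.1 then Sum.inl (eS ⟨p.1, hs⟩)
      else Sum.inr (eU ⟨p.1, p.2.resolve_left hs⟩)
  have jw : ∀ (xs : Fin (Fintype.card {p // U p}) → Ordinal) (y : P → Ordinal),
      (∀ p, S p → y p = g p) → (∀ p : {p // U p}, xs (eU p) = y p) →
      ∀ p, Sum.elim (fun i => g (eS.symm i)) xs (j p) = y p := by
    intro xs y h1 h2 p
    by_cases hs : S p.1
    · simp [j, hs, h1]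
    · simp only [j, hs, dite_false, Sum.elim_inr]
      exact h2 _
  obtain ⟨ys, h1, h2⟩ := refl1_raw h (qf_pres (fun p => S p ∨ U p) T0 T1 T2 j)
    (fun i => g (eS.symm i)) (fun i => hS _ (eS.symm i).2)
    (fun i => g (eU.symm i)) (fun i => hU _ (eU.symm i).2)
    ((pres_iff _ _ _ _ _ _ g (jw _ g (by simp) (by simp))).2 hg)
  let y : P → Ordinal := fun p => if hu : U p then ys (eU ⟨p, hu⟩) else g p
  have hy : ∀ p, ¬ U p → y p = g p := fun p hp => by simp [y, hp]
  refine ⟨y, hy, fun p hp => by simp [y, hp, h1], ?_⟩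
  exact (pres_iff _ _ _ _ _ _ y (jw ys y (fun p hp => hy p (hSU p hp))
    (fun p => by simp [y, p.2]))).1 h2

theorem limit_of {a b : Ordinal} (h : ElemSub (fun _ φ => IsSigma1 φ) le1 le2 a b)
    (hab : a < b) : 0 < a ∧ ∀ x < a, x + 1 < a := by
  constructor
  · obtain ⟨y, -, h2, -⟩ := refl1_P (P := Unit) h (fun _ => False) (fun _ => True) (by simp)
      (fun _ => a) (by simp) (fun _ _ => hab) (fun _ _ => False) (fun _ _ => False)
      (fun _ _ => False) (by intro p q; simp)
    exact lt_of_le_of_lt (zero_le) (h2 () trivial)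
  · intro x hx
    obtain ⟨y, h1, h2, h3⟩ := refl1_P (P := Bool) h (fun p => p = false) (fun p => p = true)
      (by simp) (fun p => if p then a else x) (by simpa using hx) (by simpa using hab)
      (fun p q => p = false ∧ q = true) (fun _ _ => False)
      (fun _ _ => False) (by rintro p q - -; refine ⟨?_, by simp, by simp⟩; rintro ⟨rfl, rfl⟩; simpa using hx)
    have h4 := (h3 false true (by simp) (by simp)).1 (by simp)
    have h5 := h1 false (by simp)
    have h6 := h2 true rfl
    simp only [Bool.false_eq_true, if_false] at h5
    rw [h5] at h4
    exact lt_of_le_of_lt (by simpa using h4) h6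

end os
section facts
open FirstOrder.Language
variable {le1 le2 : Ordinal → Ordinal → Prop}

theorem le1_iff (H : IsR2Pair le1 le2) {a b : Ordinal} : le1 a b ↔ a ≤ b ∧
    ∀ (k : ℕ) (φ : ordLang.Formula (Fin k)), IsSigma1 φ →
      ∀ v : Fin k → Ordinal, (∀ i, v i < a) →
        (sat le1 le2 (· < b) φ v Fin.elim0 → sat le1 le2 (· < a) φ v Fin.elim0) := by
  rw [H.1, elemSub_iff]
  refine and_congr_right fun hab => ?_
  constructor
  · intro h k φ hφ v hv
    exact (h k φ hφ v hv).2
  · intro h k φ hφ v hv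
    exact ⟨sat_sigma1_mono hφ (fun x hx => lt_of_lt_of_le hx hab) _ _, h k φ hφ v hv⟩

theorem sigma1_sigma2 {k n : ℕ} {φ : ordLang.BoundedFormula (Fin k) n} (h : IsSigma1 φ) :
    IsSigma2 φ := by
  induction h with
  | of_isQF h => exact .of_isPi1 (.of_isQF h)
  | ex _ ih => exact .ex ih

theorem tv_exists {k n : ℕ} (t : ordLang.Term (Fin k ⊕ Fin n)) :
    ∃ i, ∀ v xs, tv v xs t = Sum.elim v xs i := by
  cases t with
  | var a => exact ⟨a, fun v xs => tv_var v xs a⟩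
  | func f _ => exact Empty.elim f

theorem qf_reindex {k n k' n' : ℕ} {φ : ordLang.BoundedFormula (Fin k) n} (h : φ.IsQF)
    (D : Ordinal → Prop) (f : Fin k ⊕ Fin n → Fin k' ⊕ Fin n') :
    QFDef le1 le2 k' n' (fun w => sat le1 le2 D φ (fun i => w (f (.inl i)))
      (fun i => w (f (.inr i)))) := by
  have key : ∀ (i : Fin k ⊕ Fin n) (w : Fin k' ⊕ Fin n' → Ordinal),
      Sum.elim (fun i => w (f (.inl i))) (fun i => w (f (.inr i))) i = w (f i) := by
    intro i w; cases i <;> rfl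
  induction h with
  | falsum => exact qf_bot
  | of_isAtomic h =>
    cases h with
    | equal t1 t2 =>
      obtain ⟨i, hi⟩ := tv_exists t1
      obtain ⟨j, hj⟩ := tv_exists t2
      refine qf_congr (qf_and (qf_le (f i) (f j)) (qf_le (f j) (f i))) ?_
      intro w
      change _ ↔ tv _ _ t1 = tv _ _ t2
      rw [hi, hj, key, key]
      exact le_antisymm_iff.symm
    | rel R ts =>
      cases R with
      | le =>
        obtain ⟨i, hi⟩ := tv_exists (ts 0)
        obtain ⟨j, hj⟩ := tv_exists (ts 1)
        refine qf_congr (qf_le (f i) (f j)) ?_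
        intro w
        change _ ↔ tv _ _ (ts 0) ≤ tv _ _ (ts 1)
        rw [hi, hj, key, key]
      | le1 =>
        obtain ⟨i, hi⟩ := tv_exists (ts 0)
        obtain ⟨j, hj⟩ := tv_exists (ts 1)
        refine qf_congr (qf_le1 (f i) (f j)) ?_
        intro w
        change _ ↔ le1 (tv _ _ (ts 0)) (tv _ _ (ts 1))
        rw [hi, hj, key, key]
      | le2 =>
        obtain ⟨i, hi⟩ := tv_exists (ts 0)
        obtain ⟨j, hj⟩ := tv_exists (ts 1)
        refine qf_congr (qf_le2 (f i) (f j)) ?_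
        intro w
        change _ ↔ le2 (tv _ _ (ts 0)) (tv _ _ (ts 1))
        rw [hi, hj, key, key]
  | imp _ _ h1 h2 => exact qf_imp h1 h2

variable (le1 le2) in
def GQ {ι : Type} (A : (ι → Ordinal) → Prop) : Prop :=
  ∀ (k n : ℕ) (f : ι → Fin k ⊕ Fin n), QFDef le1 le2 k n (fun w => A (fun i => w (f i)))

theorem pi1_nf {k n : ℕ} {φ : ordLang.BoundedFormula (Fin k) n} (h : IsPi1 φ) :
    ∃ (m : ℕ) (A : ((Fin k ⊕ Fin n) ⊕ Fin m → Ordinal) → Prop), GQ le1 le2 A ∧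
      ∀ D v xs, sat le1 le2 D φ v xs ↔ ∀ zs : Fin m → Ordinal, (∀ i, D (zs i)) →
        A (Sum.elim (Sum.elim v xs) zs) := by
  induction h with
  | of_isQF h =>
    refine ⟨0, fun w => sat le1 le2 (fun _ => True) _ (fun i => w (.inl (.inl i)))
      (fun i => w (.inl (.inr i))), fun k' n' f => qf_reindex h _ (fun i => f (.inl i)), ?_⟩
    intro D v xs
    rw [sat_qf h D (fun _ => True)]
    constructor
    · intro hh zs _
      exact hh
    · intro hh
      exact hh Fin.elim0 (fun i => i.elim0)
  | @all n φ _ ih =>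
    obtain ⟨m, A, hA, h⟩ := ih
    let σ : (Fin k ⊕ Fin (n+1)) ⊕ Fin m → (Fin k ⊕ Fin n) ⊕ Fin (m+1) :=
      Sum.elim (Sum.elim (fun i => .inl (.inl i))
        (Fin.snoc (α := fun _ => (Fin k ⊕ Fin n) ⊕ Fin (m+1)) (fun i => .inl (.inr i)) (.inr 0)))
        (fun i => .inr i.succ)
    refine ⟨m+1, fun w => A (fun i => w (σ i)), fun k' n' f => hA k' n' (fun i => f (σ i)), ?_⟩
    have key : ∀ (v : Fin k → Ordinal) (xs : Fin n → Ordinal) (x : Ordinal) (zs : Fin m → Ordinal),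
        (fun i => (Sum.elim (Sum.elim v xs) (Fin.cons x zs : Fin (m+1) → Ordinal)) (σ i)) =
        Sum.elim (Sum.elim v (Fin.snoc xs x : Fin (n+1) → Ordinal)) zs := by
      intro v xs x zs
      funext i
      rcases i with (i | i) | i
      · rfl
      · refine Fin.lastCases ?_ (fun j => ?_) i <;> simp [σ]
      · simp [σ]
    intro D v xs
    constructor
    · intro hh zs hz
      have := (h D v _).1 (hh (zs 0) (hz 0)) (Fin.tail zs) (fun i => hz _)
      rw [← key, Fin.cons_self_tail] at this
      exact this
    · intro hh x hx
      rw [h]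
      intro zs hz
      have := hh (Fin.cons x zs) (by
        intro i
        refine Fin.cases ?_ (fun j => ?_) i
        · simpa using hx
        · simpa using hz j)
      beta_reduce at this
      rw [key] at this
      exact this

theorem pi1_up {a b : Ordinal} (h : ElemSub (fun _ φ => IsSigma1 φ) le1 le2 a b)
    {k n : ℕ} {φ : ordLang.BoundedFormula (Fin k) n} (hφ : IsPi1 φ) (v : Fin k → Ordinal)
    (xs : Fin n → Ordinal) (hv : ∀ i, v i < a) (hxs : ∀ i, xs i < a)
    (hs : sat le1 le2 (· < a) φ v xs) : sat le1 le2 (· < b) φ v xs := by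
  obtain ⟨m, A, hA, hh⟩ := pi1_nf (le1 := le1) (le2 := le2) hφ
  rw [hh] at hs ⊢
  by_contra hc
  push Not at hc
  obtain ⟨zs, hz, hc⟩ := hc
  let f : (Fin k ⊕ Fin n) ⊕ Fin m → Fin (k + n) ⊕ Fin m :=
    Sum.elim (fun i => .inl (finSumFinEquiv i)) .inr
  have key : ∀ zs : Fin m → Ordinal, (fun i => (Sum.elim (Fin.append v xs) zs) (f i)) =
      Sum.elim (Sum.elim v xs) zs := by
    intro zs
    funext i
    rcases i with (i | i) | i <;> simp [f]
  obtain ⟨ys, h1, h2⟩ := refl1_raw h (qf_not (hA (k+n) m f)) (Fin.append v xs)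
    (by intro i; refine Fin.addCases (fun j => ?_) (fun j => ?_) i <;> simp [hv, hxs]) zs hz
    (by rw [key]; exact hc)
  rw [key] at h2
  exact h2 (hs ys h1)

theorem sigma2_up {a b : Ordinal} (h : ElemSub (fun _ φ => IsSigma1 φ) le1 le2 a b)
    {k n : ℕ} {φ : ordLang.BoundedFormula (Fin k) n} (hφ : IsSigma2 φ) (v : Fin k → Ordinal)
    (xs : Fin n → Ordinal) (hv : ∀ i, v i < a) (hxs : ∀ i, xs i < a)
    (hs : sat le1 le2 (· < a) φ v xs) : sat le1 le2 (· < b) φ v xs := by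
  induction hφ with
  | of_isPi1 hp => exact pi1_up h hp v xs hv hxs hs
  | ex _ ih =>
    rw [sat_ex] at hs ⊢
    obtain ⟨x, hx, hs⟩ := hs
    refine ⟨x, lt_of_lt_of_le hx h.1, ih _ ?_ hs⟩
    intro i
    refine Fin.lastCases ?_ (fun j => ?_) i
    · simpa using hx
    · simpa using hxs j

theorem cont1 (H : IsR2Pair le1 le2) {a b : Ordinal} (hba : b ≤ a) (h0 : 0 < a)
    (hl : ∀ x < a, x + 1 < a)
    (h : ∀ z < a, b ≤ z → le1 b z) : le1 b a := by
  rw [le1_iff H]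
  refine ⟨hba, fun k φ hφ v hv hs => ?_⟩
  rcases hba.eq_or_lt with rfl | hlt
  · exact hs
  obtain ⟨δ, hδ, hs⟩ := sat_sigma1_bdd hl h0 hφ _ _ hs
  have := h (max δ b) (max_lt hδ hlt) (le_max_right _ _)
  rw [le1_iff H] at this
  refine this.2 k φ hφ v hv (sat_sigma1_mono hφ (fun x hx => lt_of_lt_of_le hx (le_max_left _ _)) _ _ hs)

theorem refl2_P (H : IsR2Pair le1 le2) (hresp : ∀ {a b c}, a ≤ b → b ≤ c → le1 a c → le1 a b)
    {P : Type} [Fintype P] {a b : Ordinal}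
    (h : ElemSub (fun _ φ => IsSigma2 φ) le1 le2 a b)
    (h' : ElemSub (fun _ φ => IsSigma1 φ) le1 le2 a b) (hab : a < b) (S U V : P → Prop)
    (hSU : ∀ p, S p → ¬ U p) (hV : ∀ p, V p → ¬ S p ∧ ¬ U p)
    (g : P → Ordinal) (hS : ∀ p, S p → g p < a) (hU : ∀ p, U p → g p < b)
    (T0 T1 T2 : P → P → Prop) (hg : Pres le1 le2 (fun p => S p ∨ U p) T0 T1 T2 g)
    (T0' T1' T2' : P → P → Prop)
    (hno : ¬ ∃ z : P → Ordinal, (∀ p, ¬ V p → z p = g p) ∧ (∀ p, V p → z p < b) ∧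
      Pres le1 le2 (fun p => S p ∨ U p ∨ V p) T0' T1' T2' z) :
    ∃ y : P → Ordinal, (∀ p, ¬ U p → y p = g p) ∧ (∀ p, U p → y p < a) ∧
      Pres le1 le2 (fun p => S p ∨ U p) T0 T1 T2 y ∧ (∀ p, U p → le1 (g p) b → le1 (y p) a) ∧
      ¬ ∃ z : P → Ordinal, (∀ p, (S p ∨ U p) → z p = y p) ∧ (∀ p, V p → z p < a) ∧
      Pres le1 le2 (fun p => S p ∨ U p ∨ V p) T0' T1' T2' z := by
  classical
  obtain ⟨ha0, hal⟩ := limit_of h' hab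
  let eS := Fintype.equivFin {p // S p}
  let eU := Fintype.equivFin {p // U p}
  let eV := Fintype.equivFin {p // V p}
  set kS := Fintype.card {p // S p}
  set kU := Fintype.card {p // U p}
  set kV := Fintype.card {p // V p}
  let j : P → Fin kS ⊕ Fin (kU + (kV + 1)) :=
    fun p => if hs : S p then Sum.inl (eS ⟨p, hs⟩)
      else if hu : U p then Sum.inr (Fin.castAdd (kV+1) (eU ⟨p, hu⟩))
      else if hv : V p then Sum.inr (Fin.natAdd kU (Fin.castSucc (eV ⟨p, hv⟩)))
      else Sum.inr (Fin.natAdd kU (Fin.last _))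
  let l : Fin kS ⊕ Fin (kU + (kV + 1)) := Sum.inr (Fin.natAdd kU (Fin.last _))
  let v : Fin kS → Ordinal := fun i => g (eS.symm i)
  have jw : ∀ (xs : Fin kU → Ordinal) (zs : Fin (kV+1) → Ordinal) (y : P → Ordinal),
      (∀ p, S p → y p = g p) → (∀ p : {p // U p}, xs (eU p) = y p) →
      ∀ p, (S p ∨ U p) → Sum.elim v (Fin.append xs zs) (j p) = y p := by
    intro xs zs y h1 h2 p hp
    by_cases hs : S p
    · simp [j, hs, h1, v]
    · have hu := hp.resolve_left hs
      simp only [j, hs, hu, dite_true, dite_false, Sum.elim_inr, Fin.append_left]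
      exact h2 ⟨p, hu⟩
  have jwV : ∀ (xs : Fin kU → Ordinal) (zs : Fin (kV+1) → Ordinal) (p : P) (hp : V p),
      Sum.elim v (Fin.append xs zs) (j p) = zs (Fin.castSucc (eV ⟨p, hp⟩)) := by
    intro xs zs p hp
    have h1 := (hV p hp).1
    have h2 := (hV p hp).2
    simp only [j, h1, h2, hp, dite_true, dite_false, Sum.elim_inr, Fin.append_right]
  have lw : ∀ (xs : Fin kU → Ordinal) (zs : Fin (kV+1) → Ordinal),
      Sum.elim v (Fin.append xs zs) l = zs (Fin.last _) := by
    intro xs zs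
    simp only [l, Sum.elim_inr, Fin.append_right]
  have hA := qf_and (qf_pres (le1 := le1) (le2 := le2) (fun p => S p ∨ U p) T0 T1 T2
      (fun p => j p.1)) (qf_and
    (qf_all (fun u : {u // U u ∧ le1 (g u) b} => qf_imp (qf_le (le1 := le1) (le2 := le2) (j u.1) l)
      (qf_le1 (j u.1) l)))
    (qf_not (qf_pres (fun p => S p ∨ U p ∨ V p) T0' T1' T2' (fun p => j p.1))))
  obtain ⟨ys, h1, h2⟩ := refl2_raw (m := kV + 1) h hA v (fun i => hS _ (eS.symm i).2)
    (fun i => g (eU.symm i)) (fun i => hU _ (eU.symm i).2) (by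
      intro zs hz
      have jg := jw (fun i => g (eU.symm i)) zs g (by simp) (by simp)
      refine ⟨?_, ?_, ?_⟩
      · exact (pres_iff _ _ _ _ _ _ g (fun p => jg p.1 p.2)).2 hg
      · intro u
        rw [jg u.1 (.inr u.2.1), lw]
        intro hle
        exact hresp hle (hz _).le u.2.2
      · intro hc
        refine hno ⟨fun p => if hv : V p then zs (Fin.castSucc (eV ⟨p, hv⟩)) else g p, ?_, ?_, ?_⟩
        · intro p hp; simp [hp]
        · intro p hp; simp [hp, hz]
        · refine (pres_iff _ _ _ _ _ _ _ ?_).1 hc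
          rintro ⟨p, hp⟩
          by_cases hv : V p
          · simp only [hv, dite_true]
            exact jwV _ _ p hv
          · simp only [hv, dite_false]
            exact jg p (by tauto))
  let y : P → Ordinal := fun p => if hu : U p then ys (eU ⟨p, hu⟩) else g p
  have hy : ∀ p, ¬ U p → y p = g p := fun p hp => by simp [y, hp]
  have jy := fun zs => jw ys zs y (fun p hp => hy p (hSU p hp)) (fun p => by simp [y, p.2])
  have hya : ∀ p, U p → y p < a := fun p hp => by simp [y, hp, h1]
  refine ⟨y, hy, hya, ?_, ?_, ?_⟩
  · have := (h2 (fun _ => 0) (fun _ => ha0)).1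
    exact (pres_iff _ _ _ _ _ _ y (fun p => jy _ p.1 p.2)).1 this
  · intro p hp hpb
    refine cont1 H (hya p hp).le ha0 hal ?_
    intro z hz hpz
    have := (h2 (fun _ => z) (fun _ => hz)).2.1 ⟨p, hp, hpb⟩
    rw [jy _ p (.inr hp), lw] at this
    exact this hpz
  · rintro ⟨z, hz1, hz2, hz3⟩
    refine (h2 (Fin.snoc (fun i => z (eV.symm i)) 0) ?_).2.2 ?_
    · intro i
      refine Fin.lastCases ?_ (fun j => ?_) i
      · simpa using ha0
      · simpa using hz2 _ (eV.symm j).2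
    · refine (pres_iff _ _ _ _ _ _ z ?_).2 hz3
      rintro ⟨p, hp⟩
      by_cases hv : V p
      · simp only [jwV _ _ p hv]
        simp
      · have : S p ∨ U p := by tauto
        rw [hz1 p this]
        exact jy _ p this

theorem os_of (H : IsR2Pair le1 le2) : OS le1 le2 := by
  have resp1 : ∀ {a b c}, a ≤ b → b ≤ c → le1 a c → le1 a b := by
    intro a b c hab hbc h
    rw [le1_iff H] at h ⊢
    refine ⟨hab, fun k φ hφ v hv hs => h.2 k φ hφ v hv ?_⟩
    exact sat_sigma1_mono hφ (fun x hx => lt_of_lt_of_le hx hbc) _ _ hs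
  have sub21 : ∀ {a b}, le2 a b → le1 a b := by
    intro a b h
    rw [H.1]
    rw [H.2] at h
    exact ⟨h.1, fun k φ hφ => h.2 k φ (sigma1_sigma2 hφ)⟩
  constructor
  · intro a; rw [H.1]; exact ⟨le_rfl, fun _ _ _ _ => Iff.rfl⟩
  · intro a; rw [H.2]; exact ⟨le_rfl, fun _ _ _ _ => Iff.rfl⟩
  · intro a b c hab hbc
    rw [H.1, elemSub_iff] at *
    exact ⟨hab.1.trans hbc.1, fun k φ hφ v hv => (hab.2 k φ hφ v hv).trans
      (hbc.2 k φ hφ v (fun i => (hv i).trans_le hab.1))⟩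
  · intro a b c hab hbc
    rw [H.2, elemSub_iff] at *
    exact ⟨hab.1.trans hbc.1, fun k φ hφ v hv => (hab.2 k φ hφ v hv).trans
      (hbc.2 k φ hφ v (fun i => (hv i).trans_le hab.1))⟩
  · exact sub21
  · intro a b h; rw [H.1] at h; exact h.1
  · exact resp1
  · intro a b c hab hbc hac
    rw [H.1] at hab hbc
    rw [H.2, elemSub_iff] at hac ⊢
    refine ⟨hab.1, fun k φ hφ v hv => ⟨?_, ?_⟩⟩
    · exact sigma2_up hab hφ v _ hv (fun i => i.elim0)
    · intro hs
      exact (hac.2 k φ hφ v hv).2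
        (sigma2_up hbc hφ v _ (fun i => (hv i).trans_le hab.1) (fun i => i.elim0) hs)
  · intro P _ a b h
    exact refl1_P ((H.1 _ _).1 h)
  · intro P _ a b h hab
    exact refl2_P H resp1 ((H.2 _ _).1 h) ((H.1 _ _).1 (sub21 h)) hab

end facts
section chains
open FirstOrder.Language
universe u
variable {le1 le2 : Ordinal.{u} → Ordinal.{u} → Prop}

variable (le1 le2) in
def Clo (δ : Ordinal.{u}) : Prop :=
  ∀ (k n : ℕ) (φ : ordLang.BoundedFormula (Fin k) (n+1)) (v : Fin k → Ordinal.{u})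
    (xs : Fin n → Ordinal.{u}), (∀ i, v i < δ) → (∀ i, xs i < δ) →
    (∃ x, ¬ sat le1 le2 (fun _ => True) φ v (Fin.snoc xs x)) →
    ∃ x < δ, ¬ sat le1 le2 (fun _ => True) φ v (Fin.snoc xs x)

theorem clo_sat {δ : Ordinal.{u}} (h : Clo le1 le2 δ) {k n : ℕ}
    (φ : ordLang.BoundedFormula (Fin k) n) (v : Fin k → Ordinal.{u})
    (xs : Fin n → Ordinal.{u}) (hv : ∀ i, v i < δ) (hxs : ∀ i, xs i < δ) :
    sat le1 le2 (· < δ) φ v xs ↔ sat le1 le2 (fun _ => True) φ v xs := by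
  induction φ with
  | falsum => exact Iff.rfl
  | equal _ _ => exact Iff.rfl
  | rel _ _ => exact Iff.rfl
  | imp f g hf hg => exact imp_congr (hf xs hxs) (hg xs hxs)
  | all f hf =>
    have hx' : ∀ x < δ, ∀ i, (Fin.snoc xs x : Fin _ → Ordinal.{u}) i < δ := by
      intro x hx i
      refine Fin.lastCases ?_ (fun j => ?_) i
      · simpa using hx
      · simpa using hxs j
    constructor
    · intro hs
      by_contra hc
      simp only [sat] at hc
      push Not at hc
      obtain ⟨x, -, hc⟩ := hc
      obtain ⟨x, hx, hc⟩ := h _ _ f v xs hv hxs ⟨x, hc⟩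
      exact hc ((hf _ (hx' x hx)).1 (hs x hx))
    · intro hs x hx
      exact (hf _ (hx' x hx)).2 (hs x trivial)

theorem clo_le2 (H : IsR2Pair le1 le2) {δ ε : Ordinal.{u}} (hd : Clo le1 le2 δ)
    (he : Clo le1 le2 ε) (h : δ ≤ ε) : le2 δ ε := by
  rw [H.2, elemSub_iff]
  refine ⟨h, fun k φ _ v hv => ?_⟩
  rw [clo_sat hd φ v _ hv (fun i => i.elim0),
    clo_sat he φ v _ (fun i => (hv i).trans_le h) (fun i => i.elim0)]

theorem clo_step (γ : Ordinal.{u}) : ∃ γ' > γ, 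
  ∀ (k n : ℕ) (φ : ordLang.BoundedFormula (Fin k) (n+1)) (v : Fin k → Ordinal.{u})
    (xs : Fin n → Ordinal.{u}), (∀ i, v i < γ) → (∀ i, xs i < γ) →
    (∃ x, ¬ sat le1 le2 (fun _ => True) φ v (Fin.snoc xs x)) →
    ∃ x < γ', ¬ sat le1 le2 (fun _ => True) φ v (Fin.snoc xs x) := by
  classical
  let I : Type (u+1) := Σ k : ℕ, Σ n : ℕ, ordLang.BoundedFormula (Fin k) (n+1) ×
    (Fin k → Set.Iio γ) × (Fin n → Set.Iio γ)
  have : Small.{u} I := by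
    have : ∀ k n : ℕ, Small.{u} (ordLang.BoundedFormula (Fin k) (n+1)) := fun k n =>
      ⟨ULift.{u} (ordLang.BoundedFormula (Fin k) (n+1)), ⟨Equiv.ulift.symm⟩⟩
    have : Small.{u} ℕ := ⟨ULift.{u} ℕ, ⟨Equiv.ulift.symm⟩⟩
    have : ∀ k : ℕ, Small.{u} (Fin k) := fun k => ⟨ULift.{u} (Fin k), ⟨Equiv.ulift.symm⟩⟩
    infer_instance
  let Q : I → Ordinal.{u} → Prop := fun i x =>
    ¬ sat le1 le2 (fun _ => True) i.2.2.1 (fun l => (i.2.2.2.1 l).1)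
      (Fin.snoc (fun l => (i.2.2.2.2 l).1) x)
  let w : I → Ordinal.{u} := fun i => if h : ∃ x, Q i x then h.choose + 1 else 0
  have hb : BddAbove (Set.range w) := Ordinal.bddAbove_of_small
  refine ⟨max (γ+1) (⨆ i, w i), lt_of_lt_of_le (by simp) (le_max_left _ _), ?_⟩
  intro k n φ v xs hv hxs hx
  let i : I := ⟨k, n, φ, fun l => ⟨v l, hv l⟩, fun l => ⟨xs l, hxs l⟩⟩
  have hi : ∃ x, Q i x := hx
  refine ⟨hi.choose, ?_, hi.choose_spec⟩
  have : w i = hi.choose + 1 := dif_pos hi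
  have h2 : w i ≤ ⨆ i, w i := le_ciSup hb i
  rw [this] at h2
  exact lt_of_lt_of_le (lt_of_lt_of_le (by simp) h2) (le_max_right _ _)

theorem clo_unbdd (γ : Ordinal.{u}) : ∃ δ > γ, Clo le1 le2 δ := by
  choose s hs1 hs2 using fun γ => clo_step (le1 := le1) (le2 := le2) γ
  let t : ℕ → Ordinal.{u} := fun i => s^[i] γ
  have ts : ∀ i, t (i+1) = s (t i) := fun i => Function.iterate_succ_apply' s i γ
  have tm : StrictMono t := strictMono_nat_of_lt_succ (fun i => by rw [ts]; exact hs1 _)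
  have hb : BddAbove (Set.range t) := Ordinal.bddAbove_of_small
  have lt_t : ∀ i, t i < ⨆ i, t i := fun i => (tm (Nat.lt_succ_self i)).trans_le (le_ciSup hb _)
  refine ⟨⨆ i, t i, lt_t 0, ?_⟩
  intro k n φ v xs hv hxs hx
  have hv' : ∀ i, ∃ m, v i < t m := fun i => Ordinal.lt_iSup_iff.1 (hv i)
  have hx' : ∀ i, ∃ m, xs i < t m := fun i => Ordinal.lt_iSup_iff.1 (hxs i)
  choose mv hmv using hv'
  choose mx hmx using hx'
  let M := (Finset.univ.sup mv) ⊔ (Finset.univ.sup mx)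
  obtain ⟨x, hx, h⟩ := hs2 (t M) k n φ v xs
    (fun i => (hmv i).trans_le (tm.monotone (le_trans (Finset.le_sup (Finset.mem_univ i)) le_sup_left)))
    (fun i => (hmx i).trans_le (tm.monotone (le_trans (Finset.le_sup (Finset.mem_univ i)) le_sup_right)))
    hx
  rw [← ts] at hx
  exact ⟨x, hx.trans (lt_t _), h⟩

theorem oneInfty_spec (H : IsR2Pair le1 le2) (n : ℕ) : ∃ β : Fin n → Ordinal.{u},
    (∀ i, β i < OneInfty le2) ∧
    ∀ (i : ℕ) (hi : i + 1 < n), Lt2 le2 (β ⟨i, Nat.lt_of_succ_lt hi⟩) (β ⟨i + 1, hi⟩) := by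
  have : OneInfty le2 ∈ {ν : Ordinal | ∀ n : ℕ, ∃ β : Fin n → Ordinal,
    (∀ i, β i < ν) ∧
    ∀ (i : ℕ) (hi : i + 1 < n), Lt2 le2 (β ⟨i, Nat.lt_of_succ_lt hi⟩) (β ⟨i + 1, hi⟩)} := by
    refine csInf_mem ?_
    choose s hs1 hs2 using fun γ => clo_unbdd (le1 := le1) (le2 := le2) γ
    let t : ℕ → Ordinal.{u} := fun i => s^[i] (s 0)
    have ts : ∀ i, t (i+1) = s (t i) := fun i => Function.iterate_succ_apply' s i _
    have tm : StrictMono t := strictMono_nat_of_lt_succ (fun i => by rw [ts]; exact hs1 _)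
    have hb : BddAbove (Set.range t) := Ordinal.bddAbove_of_small
    have lt_t : ∀ i, t i < ⨆ i, t i := fun i => (tm (Nat.lt_succ_self i)).trans_le (le_ciSup hb _)
    have tc : ∀ i, Clo le1 le2 (t i) := by
      intro i
      cases i with
      | zero => exact hs2 0
      | succ i => rw [ts]; exact hs2 _
    refine ⟨⨆ i, t i, fun n => ⟨fun i => t i, fun i => lt_t _, fun i hi => ⟨?_, ?_⟩⟩⟩
    · exact clo_le2 H (tc _) (tc _) (tm.monotone (Nat.le_succ i))
    · exact (tm (Nat.lt_succ_self i)).ne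
  exact this n

end chains

section comb
variable {P : Type} [Fintype P] [LinearOrder P] {l1 l2 : P → P → Prop}
  {R1 R2 : Ordinal → Ordinal → Prop}

structure RFo {P : Type} [LinearOrder P] (l1 l2 : P → P → Prop) : Prop where
  refl1 : ∀ p, l1 p p
  trans1 : ∀ {p q r}, l1 p q → l1 q r → l1 p r
  trans2 : ∀ {p q r}, l2 p q → l2 q r → l2 p r
  refl2 : ∀ p, l2 p p
  sub21 : ∀ {p q}, l2 p q → l1 p q
  sub1 : ∀ {p q}, l1 p q → p ≤ q
  resp1 : ∀ {p q r}, p ≤ q → q ≤ r → l1 p r → l1 p q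
  resp2 : ∀ {p q r}, l1 p q → l1 q r → l2 p r → l2 p q

def Cov {P : Type} [LinearOrder P] (R1 R2 : Ordinal → Ordinal → Prop) (l1 l2 : P → P → Prop)
    (c : P → Ordinal) : Prop :=
  ∀ x y, x < y → c x < c y ∧ (l1 x y → R1 (c x) (c y)) ∧ (l2 x y → R2 (c x) (c y))

def MinCov {P : Type} [LinearOrder P] (R1 R2 : Ordinal → Ordinal → Prop) (l1 l2 : P → P → Prop)
    (c : P → Ordinal) : Prop :=
  Cov R1 R2 l1 l2 c ∧ ∀ d, Cov R1 R2 l1 l2 d → (∀ p, d p ≤ c p) → ∀ p, d p = c p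

theorem Cov.lt {c : P → Ordinal} (h : Cov R1 R2 l1 l2 c) {x y : P} (hxy : x < y) : c x < c y :=
  (h x y hxy).1

theorem Cov.le {c : P → Ordinal} (h : Cov R1 R2 l1 l2 c) {x y : P} (hxy : x ≤ y) :
    c x ≤ c y := by
  rcases hxy.eq_or_lt with rfl | h'
  · exact le_rfl
  · exact (h.lt h').le

theorem Cov.h1 {c : P → Ordinal} (h : Cov R1 R2 l1 l2 c) (O : OS R1 R2) (A : RFo l1 l2)
    {x y : P} (hxy : l1 x y) : R1 (c x) (c y) := by
  rcases (A.sub1 hxy).eq_or_lt with rfl | h'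
  · exact O.refl1 _
  · exact (h x y h').2.1 hxy

theorem Cov.h2 {c : P → Ordinal} (h : Cov R1 R2 l1 l2 c) (O : OS R1 R2) (A : RFo l1 l2)
    {x y : P} (hxy : l2 x y) : R2 (c x) (c y) := by
  rcases (A.sub1 (A.sub21 hxy)).eq_or_lt with rfl | h'
  · exact O.refl2 _
  · exact (h x y h').2.2 hxy

theorem pres_of_lt (O : OS R1 R2) (A : RFo l1 l2) {W : P → Prop} {g : P → Ordinal}
    (h : ∀ x y, W x → W y → x < y → g x < g y ∧ (l1 x y → R1 (g x) (g y)) ∧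
      (l2 x y → R2 (g x) (g y))) : Pres R1 R2 W (· < ·) l1 l2 g := by
  intro x y hx hy
  refine ⟨fun k => (h x y hx hy k).1, fun k => ?_, fun k => ?_⟩
  · rcases (A.sub1 k).eq_or_lt with rfl | h'
    · exact O.refl1 _
    · exact (h x y hx hy h').2.1 k
  · rcases (A.sub1 (A.sub21 k)).eq_or_lt with rfl | h'
    · exact O.refl2 _
    · exact (h x y hx hy h').2.2 k

theorem lowering (O : OS R1 R2) (A : RFo l1 l2) {c : P → Ordinal} (hc : MinCov R1 R2 l1 l2 c)
    {α β : Ordinal} (hab : R1 α β) (U : P → Prop) (u0 : P) (hu0 : U u0) (g : P → Ordinal)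
    (hg : ∀ p, ¬ U p → g p = c p) (gb : ∀ u, U u → α ≤ g u ∧ g u < β)
    (hα : ∀ u, U u → α ≤ c u) (hs : ∀ s u, ¬ U s → U u → s < u → c s < α)
    (gs : ∀ v u, U u → v < u → (U v → g v < g u) ∧ (l1 v u → R1 (g v) (g u)) ∧
      (l2 v u → R2 (g v) (g u)))
    (iso : ∀ u s, U u → ¬ U s → ¬ l1 u s) : False := by
  obtain ⟨y, y1, y2, y3⟩ := O.rfl1 hab (fun s => ¬ U s ∧ c s < α) U (fun p h => h.1) g
    (fun p h => by rw [hg p h.1]; exact h.2) (fun p h => (gb p h).2) (· < ·) l1 l2 (by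
      refine pres_of_lt O A ?_
      intro v u hv hu hvu
      by_cases Uu : U u
      · refine ⟨?_, (gs v u Uu hvu).2⟩
        by_cases Uv : U v
        · exact (gs v u Uu hvu).1 Uv
        · rw [hg v Uv]; exact (hs v u Uv Uu hvu).trans_le (gb u Uu).1
      · have cu : c u < α := by tauto
        by_cases Uv : U v
        · exact absurd ((hα v Uv).trans_lt ((hc.1.lt hvu).trans cu)) (lt_irrefl _)
        · rw [hg u Uu, hg v Uv]; exact hc.1 v u hvu)
  have yc : ∀ p, ¬ U p → y p = c p := fun p h => (y1 p h).trans (hg p h)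
  have cov : Cov R1 R2 l1 l2 y := by
    intro v u hvu
    by_cases Uu : U u
    · have W : (¬ U v ∧ c v < α) ∨ U v := by
        by_cases Uv : U v
        · exact Or.inr Uv
        · exact Or.inl ⟨Uv, hs v u Uv Uu hvu⟩
      have := y3 v u W (Or.inr Uu)
      exact ⟨this.1 hvu, this.2⟩
    · by_cases Uv : U v
      · refine ⟨?_, fun h => absurd h (iso v u Uv Uu), fun h => absurd (A.sub21 h) (iso v u Uv Uu)⟩
        rw [yc u Uu]
        exact ((y2 v Uv).trans_le (hα v Uv)).trans (hc.1.lt hvu)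
      · rw [yc u Uu, yc v Uv]; exact hc.1 v u hvu
  have := hc.2 y cov (fun p => by
    by_cases Up : U p
    · exact ((y2 p Up).trans_le (hα p Up)).le
    · exact (yc p Up).le) u0
  exact absurd ((y2 u0 hu0).trans_le (hα u0 hu0)) (by rw [this]; exact lt_irrefl _)

theorem claim1a (O : OS R1 R2) (A : RFo l1 l2) {c : P → Ordinal} (hc : MinCov R1 R2 l1 l2 c)
    (p : P) : ∀ q, R1 (c p) (c q) → l1 p q := by
  intro q
  induction q using WellFoundedLT.induction with
  | ind q ih =>
  intro hpq
  by_contra hn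
  have lpq : p < q := by
    rcases lt_trichotomy p q with h | h | h
    · exact h
    · exact absurd (h ▸ A.refl1 p) hn
    · exact absurd (hc.1.lt h) (not_lt.2 (O.sub1 hpq))
  have hl : ∀ r, p ≤ r → r < q → l1 p r := fun r h h' =>
    ih r h' (O.resp1 (hc.1.le h) (hc.1.le h'.le) hpq)
  refine lowering O A hc hpq (fun r => p ≤ r ∧ r < q) p ⟨le_rfl, lpq⟩ c (fun _ _ => rfl)
    (fun u h => ⟨hc.1.le h.1, hc.1.lt h.2⟩) (fun u h => hc.1.le h.1) ?_ ?_ ?_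
  · intro s u hs hu hsu
    apply hc.1.lt
    by_contra h
    exact hs ⟨not_lt.1 h, hsu.trans hu.2⟩
  · intro v u _ hvu
    exact ⟨fun _ => hc.1.lt hvu, (hc.1 v u hvu).2⟩
  · intro u s hu hs h
    have : q ≤ s := by
      by_contra h'
      exact hs ⟨hu.1.trans (A.sub1 h), not_le.1 h'⟩
    exact hn (A.resp1 lpq.le this (A.trans1 (hl u hu.1 hu.2) h))

theorem claim1b (O : OS R1 R2) (A : RFo l1 l2) {c : P → Ordinal} (hc : MinCov R1 R2 l1 l2 c)
    (p : P) : ∀ q, R2 (c p) (c q) → l2 p q := by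
  intro q
  induction q using WellFoundedLT.induction with
  | ind q ih =>
  intro hpq
  by_contra hn
  have l1pq := claim1a O A hc p q (O.sub21 hpq)
  have lpq : p < q := (A.sub1 l1pq).lt_of_ne (fun h => hn (h ▸ A.refl2 p))
  have lu : ∀ u, p ≤ u → u < q → l1 p u := fun u h h' => A.resp1 h h'.le l1pq
  have n2 : ∀ u, p ≤ u → u < q → ¬ l2 u q := fun u h h' k =>
    hn (A.trans2 (ih u h' (O.resp2 (hc.1.h1 O A (lu u h h')) (hc.1.h1 O A (A.sub21 k)) hpq)) k)
  by_cases case : ∃ u s, p ≤ u ∧ u < q ∧ q ≤ s ∧ l2 u s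
  · obtain ⟨u0, s0, h1, h2, h3, h4⟩ := case
    have l10 := A.resp1 h2.le h3 (A.sub21 h4)
    have nq : ¬ l1 q s0 := fun h => n2 u0 h1 h2 (A.resp2 l10 h h4)
    have bq : ∀ b, l1 q b → q ≤ b := fun b h => A.sub1 h
    have bs : ∀ b, l1 q b → b < s0 := by
      intro b h
      by_contra h'
      exact nq (A.resp1 h3 (not_lt.1 h') h)
    have W : ∀ x, ¬ (x < p ∨ (p ≤ x ∧ x < q) ∨ l1 q x) → q ≤ x ∧ ¬ l1 q x := by
      intro x hx
      push Not at hx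
      exact ⟨hx.2.1 hx.1, hx.2.2⟩
    obtain ⟨y, y1, y2, y3, y4, y5⟩ := O.rfl2 hpq (hc.1.lt lpq) (fun x => x < p)
      (fun x => p ≤ x ∧ x < q) (fun x => l1 q x) (fun x h h' => absurd h (not_lt.2 h'.1))
      (fun x h => ⟨fun h' => absurd (h'.trans lpq) (not_lt.2 (bq x h)),
        fun h' => absurd h'.2 (not_lt.2 (bq x h))⟩) c (fun x h => hc.1.lt h)
      (fun x h => hc.1.lt h.2) (· < ·) l1 l2
      (pres_of_lt O A (fun x y _ _ h => hc.1 x y h)) (· < ·) l1 l2 (by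
        rintro ⟨z, z1, z2, z3⟩
        have cov : Cov R1 R2 l1 l2 z := by
          intro x y hxy
          by_cases hy : y < p ∨ (p ≤ y ∧ y < q) ∨ l1 q y
          · by_cases hx : x < p ∨ (p ≤ x ∧ x < q) ∨ l1 q x
            · exact ⟨(z3 x y hx hy).1 hxy, (z3 x y hx hy).2⟩
            · exfalso
              have hx := W x hx
              have : q < y := hx.1.trans_lt hxy
              have : l1 q y := by
                rcases hy with h | h | h
                · exact absurd (this.trans h) (not_lt.2 lpq.le)
                · exact absurd (this.trans h.2) (lt_irrefl _)
                · exact h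
              exact hx.2 (A.resp1 hx.1 hxy.le this)
          · have hy := W y hy
            by_cases hx : l1 q x
            · have n : ¬ l1 x y := fun h => hy.2 (A.trans1 hx h)
              refine ⟨?_, fun h => absurd h n, fun h => absurd (A.sub21 h) n⟩
              rw [z1 y hy.2]
              exact (z2 x hx).trans_le (hc.1.le hy.1)
            · rw [z1 y hy.2, z1 x hx]
              exact hc.1 x y hxy
        have := hc.2 z cov (fun x => by
          by_cases hx : l1 q x
          · exact (z2 x hx).le.trans (hc.1.le (bq x hx))
          · exact (z1 x hx).le) q
        exact absurd (z2 q (A.refl1 q)) (by rw [this]; exact lt_irrefl _))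
    apply y5
    have hα : R1 (c p) (c s0) := hc.1.h1 O A (A.trans1 (lu u0 h1 h2) (A.sub21 h4))
    have yc : ∀ x, q ≤ x → y x = c x := fun x h => y1 x (fun h' => absurd h'.2 (not_lt.2 h))
    obtain ⟨z, z1, z2, z3⟩ := O.rfl1 hα (fun x => x < q) (fun x => l1 q x)
      (fun x h h' => absurd h (not_lt.2 (bq x h'))) y (by
        intro x h
        by_cases hx : p ≤ x
        · exact y2 x ⟨hx, h⟩
        · rw [y1 x (fun h' => hx h'.1)]; exact hc.1.lt (not_le.1 hx))
      (fun x h => by rw [yc x (bq x h)]; exact hc.1.lt (bs x h)) (· < ·) l1 l2 (by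
        refine pres_of_lt O A ?_
        intro x z hx hz hxz
        by_cases hzq : z < q
        · have hxq := hxz.trans hzq
          have k : ∀ x, x < q → x < p ∨ (p ≤ x ∧ x < q) := fun x h => by
            rcases lt_or_ge x p with h' | h'
            · exact Or.inl h'
            · exact Or.inr ⟨h', h⟩
          have := y3 x z (k x hxq) (k z hzq)
          exact ⟨this.1 hxz, this.2⟩
        · have hqz := not_lt.1 hzq
          have hz : l1 q z := hz.resolve_left hzq
          rw [yc z hqz]
          by_cases hxU : p ≤ x ∧ x < q
          · refine ⟨(y2 x hxU).trans_le (hc.1.le (lpq.le.trans hqz)), fun h => ?_, fun h => ?_⟩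
            · have h' := A.resp1 hxU.2.le hqz h
              exact O.trans1 (y4 x hxU (hc.1.h1 O A h'))
                (hc.1.h1 O A (A.trans1 (lu x hxU.1 hxU.2) h))
            · exact absurd (A.resp2 (A.resp1 hxU.2.le hqz (A.sub21 h)) hz h) (n2 x hxU.1 hxU.2)
          · rw [y1 x hxU]
            exact hc.1 x z hxz)
    refine ⟨z, ?_, z2, ?_⟩
    · intro x hx
      apply z1
      intro h
      have := bq x h
      rcases hx with h' | h'
      · exact absurd (h'.trans lpq) (not_lt.2 this)
      · exact absurd h'.2 (not_lt.2 this)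
    · intro x y hx hy
      have k : ∀ x, (x < p ∨ (p ≤ x ∧ x < q) ∨ l1 q x) → x < q ∨ l1 q x := by
        rintro x (h | h | h)
        · exact Or.inl (h.trans lpq)
        · exact Or.inl h.2
        · exact Or.inr h
      exact z3 x y (k x hx) (k y hy)
  · push Not at case
    obtain ⟨y, y1, y2, y3, y4, -⟩ := O.rfl2 hpq (hc.1.lt lpq) (fun x => x < p)
      (fun x => p ≤ x ∧ x < q) (fun x => False) (fun x h h' => absurd h (not_lt.2 h'.1))
      (fun x h => h.elim) c (fun x h => hc.1.lt h)
      (fun x h => hc.1.lt h.2) (· < ·) l1 l2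
      (pres_of_lt O A (fun x y _ _ h => hc.1 x y h)) (fun _ _ => True) l1 l2 (by
        rintro ⟨z, z1, z2, z3⟩
        exact lt_irrefl _ ((z3 p p (Or.inr (Or.inl ⟨le_rfl, lpq⟩))
          (Or.inr (Or.inl ⟨le_rfl, lpq⟩))).1 trivial))
    have cov : Cov R1 R2 l1 l2 y := by
      intro x z hxz
      by_cases hzq : z < q
      · have hxq := hxz.trans hzq
        have k : ∀ x, x < q → x < p ∨ (p ≤ x ∧ x < q) := fun x h => by
          rcases lt_or_ge x p with h' | h'
          · exact Or.inl h'
          · exact Or.inr ⟨h', h⟩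
        have := y3 x z (k x hxq) (k z hzq)
        exact ⟨this.1 hxz, this.2⟩
      · have hqz := not_lt.1 hzq
        rw [y1 z (fun h => hzq h.2)]
        by_cases hxU : p ≤ x ∧ x < q
        · refine ⟨(y2 x hxU).trans_le (hc.1.le (lpq.le.trans hqz)), fun h => ?_, fun h => ?_⟩
          · have h' := A.resp1 hxU.2.le hqz h
            exact O.trans1 (y4 x hxU (hc.1.h1 O A h'))
              (hc.1.h1 O A (A.trans1 (lu x hxU.1 hxU.2) h))
          · exact absurd h (case x z hxU.1 hxU.2 hqz)
        · rw [y1 x hxU]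
          exact hc.1 x z hxz
    have := hc.2 y cov (fun x => by
      by_cases hx : p ≤ x ∧ x < q
      · exact (y2 x hx).le.trans (hc.1.le hx.1)
      · exact (y1 x hx).le) p
    exact absurd (y2 p ⟨le_rfl, lpq⟩) (by rw [this]; exact lt_irrefl _)

end comb

section comb2
variable {P : Type} [Fintype P] [LinearOrder P] {l1 l2 : P → P → Prop}
  {R1 R2 : Ordinal → Ordinal → Prop}

theorem exists_max_of (Q : P → Prop) (h : ∃ x, Q x) : ∃ t, Q t ∧ ∀ s, Q s → s ≤ t := by
  classical
  obtain ⟨x, hx⟩ := h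
  obtain ⟨t, ht, hm⟩ := (Finset.univ.filter Q).exists_max_image id ⟨x, by simpa using hx⟩
  exact ⟨t, by simpa using ht, fun s hs => hm s (by simpa using hs)⟩

theorem exists_min_of (Q : P → Prop) (h : ∃ x, Q x) : ∃ t, Q t ∧ ∀ s, Q s → t ≤ s := by
  classical
  obtain ⟨x, hx⟩ := h
  obtain ⟨t, ht, hm⟩ := (Finset.univ.filter Q).exists_min_image id ⟨x, by simpa using hx⟩
  exact ⟨t, by simpa using ht, fun s hs => hm s (by simpa using hs)⟩

theorem step2 (O : OS R1 R2) (A : RFo l1 l2) {c c' : P → Ordinal}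
    (hc : MinCov R1 R2 l1 l2 c) (hc' : Cov R1 R2 l1 l2 c') {t r : P} (ht : c t = c' t)
    (hrt : l1 r t) (rt : r < t) (iso : ∀ u s, r ≤ u → u ≤ t → t < s → ¬ l1 u s)
    (hr : c r < c' r) {u : P} (ru : r ≤ u) (ut : u ≤ t)
    (hb : ∀ r', l1 r' t → r' ≤ u → r' ≤ r) : c u < c' r := by
  by_contra hn
  have hn := not_lt.1 hn
  refine lowering O A hc (hc'.h1 O A hrt)
    (fun v => (r ≤ v ∧ v ≤ t ∧ ∀ r', l1 r' t → r' ≤ v → r' ≤ r) ∧ c' r ≤ c v)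
    u ⟨⟨ru, ut, hb⟩, hn⟩ c (fun _ _ => rfl) ?_ (fun u h => h.2) ?_ ?_ ?_
  · rintro v ⟨⟨h1, h2, h3⟩, h4⟩
    refine ⟨h4, ?_⟩
    rw [← ht]
    refine hc.1.lt (h2.lt_of_ne ?_)
    rintro rfl
    exact absurd (h3 v (A.refl1 v) le_rfl) (not_le.2 rt)
  · rintro s v hs ⟨⟨h1, h2, h3⟩, h4⟩ hsv
    by_contra h
    have h := not_lt.1 h
    apply hs
    refine ⟨⟨?_, hsv.le.trans h2, fun r' a b => h3 r' a (b.trans hsv.le)⟩, h⟩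
    by_contra h'
    exact absurd (((hc.1.lt (not_le.1 h')).trans hr).trans_le h) (lt_irrefl _)
  · intro v u _ hvu
    exact ⟨fun _ => hc.1.lt hvu, (hc.1 v u hvu).2⟩
  · rintro x s ⟨⟨h1, h2, h3⟩, h4⟩ hs hxs
    have xs := A.sub1 hxs
    by_cases hst : s ≤ t
    · have : ∃ r', l1 r' t ∧ r' ≤ s ∧ r < r' := by
        by_contra h
        push Not at h
        exact hs ⟨⟨h1.trans xs, hst, h⟩, h4.trans (hc.1.le xs)⟩
      obtain ⟨r', a, b, d⟩ := this
      have xr : x < r' := by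
        by_contra h
        exact absurd (h3 r' a (not_lt.1 h)) (not_le.2 d)
      have := h3 x (A.trans1 (A.resp1 xr.le b hxs) a) le_rfl
      have e : x = r := le_antisymm this h1
      rw [e] at h4
      exact absurd hr (not_lt.2 h4)
    · exact iso x s h1 h2 (not_le.1 hst) hxs

theorem R1_min (O : OS R1 R2) {a a' b b' : Ordinal} (h : R1 a b) (h' : R1 a' b') :
    R1 (min a a') (min b b') := by
  rcases le_total a a' with k | k <;> rcases le_total b b' with m | m <;> simp only [k, m, inf_of_le_left, inf_of_le_right]
  · exact h
  · exact O.resp1 (k.trans (O.sub1 h')) m h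
  · exact O.resp1 (k.trans (O.sub1 h)) m h'
  · exact h'

theorem cross (O : OS R1 R2) {a a' b b' e γ : Ordinal} (h1 : R2 a b) (h2 : R2 a' b')
    (h3 : R2 a e) (h4 : a' < a) (h5 : b < b') (h6 : R1 a' γ) (h7 : R1 a γ) (h8 : R1 b γ)
    (h9 : b' ≤ γ) : R2 a' e := by
  have hab := O.sub1 (O.sub21 h1)
  have k1 : R2 a' b := O.resp2 (O.resp1 (h4.le.trans hab) (O.sub1 h8) h6)
    (O.resp1 h5.le h9 h8) h2
  exact O.trans2 (O.resp2 (O.resp1 h4.le (O.sub1 h7) h6) (O.sub21 h1) k1) h3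

theorem claim2 (O : OS R1 R2) (A : RFo l1 l2) {c c' : P → Ordinal}
    (hc : MinCov R1 R2 l1 l2 c) (hc' : MinCov R1 R2 l1 l2 c') (p : P)
    (hp : ∀ s < p, c s = c' s) (hlt : c p < c' p) : False := by
  classical
  obtain ⟨t, ht, tm⟩ := exists_max_of (fun s => l1 p s) ⟨p, A.refl1 p⟩
  have pt := A.sub1 ht
  have lC : ∀ u, p ≤ u → u ≤ t → l1 p u := fun u h h' => A.resp1 h h' ht
  have iso : ∀ u s, p ≤ u → u ≤ t → t < s → ¬ l1 u s := fun u s h h' k m =>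
    absurd (tm s (A.trans1 (lC u h h') m)) (not_le.2 k)
  -- step 1
  have e1 : c t = c' t := by
    rcases lt_trichotomy (c t) (c' t) with h | h | h
    · exfalso
      by_cases hU : ∃ u, (p ≤ u ∧ u ≤ t) ∧ c' p ≤ c u
      · obtain ⟨u0, hu0⟩ := hU
        refine lowering O A hc (hc'.1.h1 O A ht) (fun u => (p ≤ u ∧ u ≤ t) ∧ c' p ≤ c u)
          u0 hu0 c (fun _ _ => rfl)
          (fun u hu => ⟨hu.2, (hc.1.le hu.1.2).trans_lt h⟩) (fun u hu => hu.2) ?_ ?_ ?_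
        · intro s u hs hu hsu
          by_contra k
          have k := not_lt.1 k
          refine hs ⟨⟨?_, hsu.le.trans hu.1.2⟩, k⟩
          by_contra h'
          exact absurd (((hc.1.lt (not_le.1 h')).trans hlt).trans_le k) (lt_irrefl _)
        · intro v u _ hvu
          exact ⟨fun _ => hc.1.lt hvu, (hc.1 v u hvu).2⟩
        · intro u s hu hs hus
          have us := A.sub1 hus
          refine iso u s hu.1.1 hu.1.2 ?_ hus
          by_contra k
          exact hs ⟨⟨hu.1.1.trans us, not_lt.1 k⟩, hu.2.trans (hc.1.le us)⟩
      · push Not at hU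
        have cov : Cov R1 R2 l1 l2 (fun x => if x ≤ t then c x else c' x) := by
          intro x y hxy
          by_cases hy : y ≤ t
          · simp only [hy, hxy.le.trans hy, if_true]
            exact hc.1 x y hxy
          · by_cases hx : x ≤ t
            · simp only [hx, hy, if_true, if_false]
              by_cases hxp : x < p
              · rw [hp x hxp]; exact hc'.1 x y hxy
              · have hxp := not_lt.1 hxp
                have n := iso x y hxp hx (not_le.1 hy)
                exact ⟨(hU x ⟨hxp, hx⟩).trans_le (hc'.1.le (hxp.trans hxy.le)),
                  fun h => absurd h n, fun h => absurd (A.sub21 h) n⟩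
            · simp only [hx, hy, if_false]
              exact hc'.1 x y hxy
        have := hc'.2 _ cov (fun x => by
          by_cases hx : x ≤ t
          · simp only [hx, if_true]
            by_cases hxp : x < p
            · exact (hp x hxp).le
            · have hxp := not_lt.1 hxp
              exact (hU x ⟨hxp, hx⟩).le.trans (hc'.1.le hxp)
          · simp only [hx, if_false, le_refl]) p
        simp only [pt, if_true] at this
        exact absurd this hlt.ne
    · exact h
    · exfalso
      refine lowering O A hc (hc.1.h1 O A ht) (fun u => p ≤ u ∧ u ≤ t) p ⟨le_rfl, pt⟩
        (fun x => if p ≤ x ∧ x ≤ t then c' x else c x) (fun x hx => by simp only [hx, if_false])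
        ?_ (fun u hu => hc.1.le hu.1) ?_ ?_ ?_
      · intro u hu
        simp only [hu, and_self, if_true]
        exact ⟨hlt.le.trans (hc'.1.le hu.1), (hc'.1.le hu.2).trans_lt h⟩
      · intro s u hs hu hsu
        apply hc.1.lt
        by_contra k
        exact hs ⟨not_lt.1 k, hsu.le.trans hu.2⟩
      · intro v u hu hvu
        have : (if p ≤ v ∧ v ≤ t then c' v else c v) = c' v := by
          split_ifs with k
          · rfl
          · apply hp
            by_contra m
            exact k ⟨not_lt.1 m, hvu.le.trans hu.2⟩
        simp only [this, hu, and_self, if_true]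
        exact ⟨fun _ => hc'.1.lt hvu, (hc'.1 v u hvu).2⟩
      · intro u s hu hs hus
        refine iso u s hu.1 hu.2 ?_ hus
        by_contra k
        exact hs ⟨hu.1.trans (A.sub1 hus), not_lt.1 k⟩
  -- step 3
  obtain ⟨r0, ⟨h0p, h0t, h0e⟩, h0m⟩ := exists_min_of (fun r => p ≤ r ∧ l1 r t ∧ c r = c' r)
    ⟨t, pt, A.refl1 t, e1⟩
  have r0t := A.sub1 h0t
  have pr0 : p < r0 := h0p.lt_of_ne (by rintro rfl; exact absurd h0e hlt.ne)
  have K : ∀ u, p ≤ u → u < r0 → ∃ r, p ≤ r ∧ r ≤ u ∧ l1 r t ∧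
      ((c r < c' r ∧ ∀ v, r ≤ v → v ≤ u → c v < c' v) ∨
       (c' r < c r ∧ ∀ v, r ≤ v → v ≤ u → c' v < c v)) := by
    intro u pu ur0
    obtain ⟨r, ⟨hr1, hr2⟩, hr3⟩ := exists_max_of (fun r => l1 r t ∧ r ≤ u) ⟨p, ht, pu⟩
    have pr := hr3 p ⟨ht, pu⟩
    have rt : r < t := hr2.trans_lt (ur0.trans_le r0t)
    have ut : u ≤ t := ur0.le.trans r0t
    refine ⟨r, pr, hr2, hr1, ?_⟩
    have iso' : ∀ u s, r ≤ u → u ≤ t → t < s → ¬ l1 u s := fun u s h => iso u s (pr.trans h)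
    rcases lt_trichotomy (c r) (c' r) with h | h | h
    · refine Or.inl ⟨h, fun v a b => ?_⟩
      exact (step2 O A hc hc'.1 e1 hr1 rt iso' h a (b.trans ut)
        (fun r' m n => hr3 r' ⟨m, n.trans b⟩)).trans_le (hc'.1.le a)
    · exact absurd (h0m r ⟨pr, hr1, h⟩) (not_le.2 (hr2.trans_lt ur0))
    · refine Or.inr ⟨h, fun v a b => ?_⟩
      exact (step2 O A hc' hc.1 e1.symm hr1 rt iso' h a (b.trans ut)
        (fun r' m n => hr3 r' ⟨m, n.trans b⟩)).trans_le (hc.1.le a)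
  have cov : Cov R1 R2 l1 l2 (fun x => if x ≤ r0 then min (c x) (c' x) else c' x) := by
    intro x y hxy
    by_cases hy : y ≤ r0
    · have hx : x < r0 := hxy.trans_le hy
      simp only [hx.le, hy, if_true]
      refine ⟨min_lt_min (hc.1.lt hxy) (hc'.1.lt hxy),
        fun h => R1_min O (hc.1.h1 O A h) (hc'.1.h1 O A h), fun h => ?_⟩
      by_cases hxp : x < p
      · have e := hp x hxp
        rcases le_total (c y) (c' y) with k | k
        · rw [min_eq_left k, min_eq_left e.le]; exact hc.1.h2 O A h
        · rw [min_eq_right k, min_eq_right e.ge]; exact hc'.1.h2 O A h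
      have hxp := not_lt.1 hxp
      by_cases hyr : y = r0
      · have e : c y = c' y := hyr ▸ h0e
        rcases le_total (c x) (c' x) with k | k
        · rw [min_eq_left k, min_eq_left e.le]; exact hc.1.h2 O A h
        · rw [min_eq_right k, min_eq_right e.ge]; exact hc'.1.h2 O A h
      have hyr : y < r0 := hy.lt_of_ne hyr
      obtain ⟨r, pr, ry, rt, hK⟩ := K y (hxp.trans hxy.le) hyr
      have h' := A.sub21 h
      by_cases rx : r ≤ x
      · rcases hK with ⟨-, hK⟩ | ⟨-, hK⟩
        · rw [min_eq_left (hK x rx hxy.le).le, min_eq_left (hK y ry le_rfl).le]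
          exact hc.1.h2 O A h
        · rw [min_eq_right (hK x rx hxy.le).le, min_eq_right (hK y ry le_rfl).le]
          exact hc'.1.h2 O A h
      · have xr : x < r := not_le.1 rx
        have l1xr : l1 x r := A.resp1 xr.le ry h'
        have l1xt := A.trans1 l1xr rt
        have l1ry : l1 r y := A.resp1 ry (hy.trans r0t) rt
        have l2xr : l2 x r := A.resp2 l1xr l1ry h
        rcases hK with ⟨k1, hK⟩ | ⟨k1, hK⟩
        · rw [min_eq_left (hK y ry le_rfl).le]
          rcases le_or_gt (c x) (c' x) with k | k
          · rw [min_eq_left k]; exact hc.1.h2 O A h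
          · rw [min_eq_right k.le]
            exact cross O (γ := c t) (hc.1.h2 O A l2xr) (hc'.1.h2 O A l2xr) (hc.1.h2 O A h) k k1
              (e1 ▸ hc'.1.h1 O A l1xt) (hc.1.h1 O A l1xt) (hc.1.h1 O A rt)
              (e1 ▸ hc'.1.le (A.sub1 rt))
        · rw [min_eq_right (hK y ry le_rfl).le]
          rcases le_or_gt (c' x) (c x) with k | k
          · rw [min_eq_right k]; exact hc'.1.h2 O A h
          · rw [min_eq_left k.le]
            exact cross O (γ := c' t) (hc'.1.h2 O A l2xr) (hc.1.h2 O A l2xr) (hc'.1.h2 O A h) k k1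
              (e1 ▸ hc.1.h1 O A l1xt) (hc'.1.h1 O A l1xt) (hc'.1.h1 O A rt)
              (e1 ▸ hc.1.le (A.sub1 rt))
    · have r0y := not_le.1 hy
      by_cases hx : x ≤ r0
      · simp only [hx, hy, if_true, if_false]
        refine ⟨(min_le_right _ _).trans_lt (hc'.1.lt hxy), ?_⟩
        rcases le_or_gt (c' x) (c x) with k | k
        · rw [min_eq_right k]; exact (hc'.1 x y hxy).2
        rw [min_eq_left k.le]
        have hxp : p ≤ x := by
          by_contra m
          exact absurd (hp x (not_le.1 m)) k.ne
        have key : l1 x y → l1 x r0 ∧ l1 r0 y := by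
          intro h
          have yt : y ≤ t := by
            by_contra m
            exact iso x y hxp (hx.trans r0t) (not_le.1 m) h
          exact ⟨A.resp1 hx r0y.le h, A.resp1 r0y.le yt h0t⟩
        refine ⟨fun h => ?_, fun h => ?_⟩
        · obtain ⟨a, b⟩ := key h
          exact O.trans1 (h0e ▸ hc.1.h1 O A a) (hc'.1.h1 O A b)
        · obtain ⟨a, b⟩ := key (A.sub21 h)
          have l2' := A.resp2 a b h
          have m : R2 (c x) (c' r0) := h0e ▸ hc.1.h2 O A l2'
          exact O.trans2 (O.resp2 (O.resp1 k.le (hc'.1.le hx) (O.sub21 m)) (hc'.1.h1 O A a) m)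
            (hc'.1.h2 O A h)
      · simp only [hx, hy, if_false]
        exact hc'.1 x y hxy
  have := hc'.2 _ cov (fun x => by
    split_ifs
    · exact min_le_right _ _
    · exact le_rfl) p
  simp only [h0p, if_true, min_eq_left hlt.le] at this
  exact absurd this hlt.ne

theorem minCov_unique (O : OS R1 R2) (A : RFo l1 l2) {c c' : P → Ordinal}
    (hc : MinCov R1 R2 l1 l2 c) (hc' : MinCov R1 R2 l1 l2 c') : c = c' := by
  by_contra hn
  obtain ⟨p, hp, hm⟩ := exists_min_of (fun p => c p ≠ c' p) (by
    by_contra h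
    push Not at h
    exact hn (funext h))
  have hs : ∀ s < p, c s = c' s := fun s h => by
    by_contra k
    exact absurd (hm s k) (not_le.2 h)
  rcases lt_or_gt_of_ne hp with h | h
  · exact claim2 O A hc hc' p hs h
  · exact claim2 O A hc' hc p (fun s h => (hs s h).symm) h

theorem exists_minCov {c : P → Ordinal} (hc : Cov R1 R2 l1 l2 c) :
    ∃ e, MinCov R1 R2 l1 l2 e ∧ ∀ p, e p ≤ c p := by
  obtain ⟨e, ⟨he1, he2⟩, hm⟩ := WellFounded.has_min
    (wellFounded_lt (α := P → Ordinal)) {e | Cov R1 R2 l1 l2 e ∧ ∀ p, e p ≤ c p}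
    ⟨c, hc, fun _ => le_rfl⟩
  refine ⟨e, ⟨he1, fun d hd hde p => ?_⟩, he2⟩
  by_contra hne
  exact hm d ⟨hd, fun q => (hde q).trans (he2 q)⟩
    (lt_of_le_of_ne hde (fun h => hne (congrFun h p)))

theorem least_cov (O : OS R1 R2) (A : RFo l1 l2) {c0 : P → Ordinal}
    (h0 : Cov R1 R2 l1 l2 c0) : ∃ e : P → Ordinal, (∀ x y, x < y → e x < e y) ∧
      (∀ x y, l1 x y ↔ R1 (e x) (e y)) ∧ (∀ x y, l2 x y ↔ R2 (e x) (e y)) ∧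
      ∀ c, Cov R1 R2 l1 l2 c → ∀ p, e p ≤ c p := by
  obtain ⟨e, he, -⟩ := exists_minCov h0
  refine ⟨e, fun x y h => he.1.lt h, fun x y => ⟨fun h => he.1.h1 O A h, claim1a O A he x y⟩,
    fun x y => ⟨fun h => he.1.h2 O A h, claim1b O A he x y⟩, fun c hc => ?_⟩
  obtain ⟨e', he', hle⟩ := exists_minCov hc
  rw [minCov_unique O A he he']
  exact hle

end comb2

theorem pwLE_of {P : Type} [Fintype P] [LinearOrder P] {f g : P → Ordinal} (hf : StrictMono f)
    (hg : StrictMono g) (hfg : ∀ p, f p ≤ g p) {X Y : Finset Ordinal}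
    (hX : ∀ x, x ∈ X ↔ ∃ p, f p = x) (hY : ∀ x, x ∈ Y ↔ ∃ p, g p = x) : pwLE X Y := by
  classical
  have eX : X = Finset.univ.image f := by ext x; simp [hX]
  have eY : Y = Finset.univ.image g := by ext x; simp [hY]
  have cX : X.card = Fintype.card P := by
    rw [eX, Finset.card_image_of_injective _ hf.injective, Finset.card_univ]
  have cY : Y.card = Fintype.card P := by
    rw [eY, Finset.card_image_of_injective _ hg.injective, Finset.card_univ]
  refine ⟨cX.trans cY.symm, fun i => ?_⟩
  let k := Fintype.orderIsoFinOfCardEq P cX.symm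
  have h1 := Finset.orderEmbOfFin_unique (s := X) rfl (f := f ∘ k)
    (fun x => (hX _).2 ⟨_, rfl⟩) (hf.comp k.strictMono)
  have h2 := Finset.orderEmbOfFin_unique (s := Y) (cY.trans cX.symm) (f := g ∘ k)
    (fun x => (hY _).2 ⟨_, rfl⟩) (hg.comp k.strictMono)
  rw [Finset.coe_orderIsoOfFin_apply, Finset.coe_orderIsoOfFin_apply, ← h1, ← h2]
  exact hfg _

theorem pwLE_antisymm {X Y : Finset Ordinal} (h : pwLE X Y) (h' : pwLE Y X) : X = Y := by
  obtain ⟨c, h⟩ := h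
  obtain ⟨c', h'⟩ := h'
  have e : ∀ i, X.orderEmbOfFin rfl i = Y.orderEmbOfFin c.symm i := by
    intro i
    refine le_antisymm ?_ ?_
    · simpa [Finset.coe_orderIsoOfFin_apply] using h i
    · have := h' (Fin.cast c i)
      simp only [Finset.coe_orderIsoOfFin_apply] at this
      have k1 : X.orderEmbOfFin rfl i = X.orderEmbOfFin c'.symm (Fin.cast c i) :=
        Finset.orderEmbOfFin_eq_orderEmbOfFin_iff.2 rfl
      have k2 : Y.orderEmbOfFin c.symm i = Y.orderEmbOfFin rfl (Fin.cast c i) :=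
        Finset.orderEmbOfFin_eq_orderEmbOfFin_iff.2 rfl
      rw [k1, k2]
      exact this
  have r1 := Finset.range_orderEmbOfFin X rfl
  have r2 := Finset.range_orderEmbOfFin Y c.symm
  apply Finset.coe_injective
  rw [← r1, ← r2]
  congr 1
  exact funext e

theorem main_aux {P : Type} [Fintype P] [LinearOrder P] {l1 l2 : P → P → Prop}
    {le1 le2 : Ordinal → Ordinal → Prop} (h : IsR2Pair le1 le2) (A : RFo l1 l2) :
    ∃ e : P → Ordinal, (∀ x y, x < y → e x < e y) ∧
      (∀ x y, l1 x y ↔ le1 (e x) (e y)) ∧ (∀ x y, l2 x y ↔ le2 (e x) (e y)) ∧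
      (∀ c, Cov le1 le2 l1 l2 c → ∀ p, e p ≤ c p) ∧ ∀ p, e p < OneInfty le2 := by
  have O := os_of h
  obtain ⟨β, b1, b2⟩ := oneInfty_spec h (Fintype.card P)
  have b3 : ∀ (j i : ℕ) (hj : j < Fintype.card P) (hij : i < j),
      le2 (β ⟨i, hij.trans hj⟩) (β ⟨j, hj⟩) ∧ β ⟨i, hij.trans hj⟩ < β ⟨j, hj⟩ := by
    intro j
    induction j with
    | zero => intro i hj hij; omega
    | succ j ih =>
      intro i hj hij
      have s := b2 j hj
      have s' : β ⟨j, Nat.lt_of_succ_lt hj⟩ < β ⟨j + 1, hj⟩ :=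
        lt_of_le_of_ne (O.sub1 (O.sub21 s.1)) s.2
      rcases (Nat.lt_succ_iff.1 hij).eq_or_lt with rfl | k
      · exact ⟨s.1, s'⟩
      · have := ih i (Nat.lt_of_succ_lt hj) k
        exact ⟨O.trans2 this.1 s.1, this.2.trans s'⟩
  let k := (Fintype.orderIsoFinOfCardEq P rfl).symm
  have cov : Cov le1 le2 l1 l2 (fun p => β (k p)) := by
    intro x y hxy
    have hk : k x < k y := k.strictMono hxy
    have := b3 (k y) (k x) (k y).2 hk
    exact ⟨this.2, fun _ => O.sub21 this.1, fun _ => this.1⟩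
  obtain ⟨e, e1, e2, e3, e4⟩ := least_cov O A cov
  exact ⟨e, e1, e2, e3, e4, fun p => (e4 _ cov p).trans_lt (b1 _)⟩

theorem stmt0 (le1 le2 : Ordinal → Ordinal → Prop) (h : IsR2Pair le1 le2) (F : RForest) :
    ∃ X : Finset Ordinal, IsIsominimalRealization le1 le2 F X ∧
      (∀ Y : Finset Ordinal, IsIsominimalRealization le1 le2 F Y → Y = X) ∧
      ∀ x ∈ X, x < OneInfty le2 := by
  classical
  letI : LinearOrder F.P :=
    { le := F.le0
      le_refl := F.le0_refl
      le_trans := F.le0_trans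
      le_antisymm := F.le0_antisymm
      le_total := F.le0_total
      toDecidableLE := Classical.decRel _ }
  have A : RFo F.le1 F.le2 :=
    { refl1 := F.le1_refl
      trans1 := fun {p q r} => F.le1_trans p q r
      trans2 := fun {p q r} => F.le2_trans p q r
      refl2 := F.le2_refl
      sub21 := fun {p q} => F.le2_sub_le1 p q
      sub1 := fun {p q} => F.le1_sub_le0 p q
      resp1 := fun {p q r} => F.respects1 p q r
      resp2 := fun {p q r} => F.respects2 p q r }
  obtain ⟨e, e1, e2, e3, e4, e5⟩ := main_aux h A
  have em : StrictMono e := fun x y => e1 x y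
  have hX : ∀ x, x ∈ Finset.univ.image e ↔ ∃ p, e p = x := by intro x; simp
  have real : Realizes le1 le2 F (Finset.univ.image e) := by
    refine ⟨Equiv.ofBijective (fun p => ⟨e p, (hX _).2 ⟨p, rfl⟩⟩) ⟨?_, ?_⟩, fun p q => ?_⟩
    · intro p q hpq
      exact em.injective (congrArg Subtype.val hpq)
    · rintro ⟨x, hx⟩
      obtain ⟨p, rfl⟩ := (hX x).1 hx
      exact ⟨p, rfl⟩
    · exact ⟨(em.le_iff_le (a := p) (b := q)).symm, e2 p q, e3 p q⟩
  have mn : ∀ Y : Finset Ordinal, Realizes le1 le2 F Y → pwLE (Finset.univ.image e) Y := by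
    rintro Y ⟨f, hf⟩
    have fm : StrictMono (fun p => (f p : Ordinal)) :=
      strictMono_of_le_iff_le (fun p q => (hf p q).1)
    have cov : Cov le1 le2 F.le1 F.le2 (fun p => (f p : Ordinal)) := fun x y hxy =>
      ⟨fm hxy, (hf x y).2.1.1, (hf x y).2.2.1⟩
    refine pwLE_of em fm (e4 _ cov) hX (fun x => ⟨fun hx => ?_, ?_⟩)
    · exact ⟨f.symm ⟨x, hx⟩, by simp⟩
    · rintro ⟨p, rfl⟩
      exact (f p).2
  refine ⟨Finset.univ.image e, ⟨real, mn⟩, fun Y hY => ?_, fun x hx => ?_⟩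
  · exact pwLE_antisymm (hY.2 _ real) (mn Y hY.1)
  · obtain ⟨p, rfl⟩ := (hX x).1 hx
    exact e5 p
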